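/- arXiv:1810.11749 — 3 statements merged into one kernel-verified Lean document; each statement's English description precedes it below -/
import Mathlib

section
/- Let N₁, N₂, m, r be positive integers and let γ ≥ 1 be a real number. Set s := 100·γ⁴·r and t := 800·γ¹²·s, and assume t + s + r ≤ min{N₁, N₂}. Suppose the linear map 𝓐 : ℝ^{N₁×N₂} → ℝ^m satisfies the modified rank-restricted isometry property of order t + s + r with constants 0 < α ≤ β such that β/α ≤ γ. Let X ∈ ℝ^{N₁×N₂} with rank(X) ≤ r and let y := 𝓐(X). Let (Xₙ)_{n≥0} be any sequence of matrices such that X₀ = 0 and, for every n ≥ 0, there is a matrix Wₙ which is a best rank-t approximation of 𝓐*(sgn(y − 𝓐(Xₙ))) such that X_{n+1} is a best rank-s approximation of Xₙ + μₙ·Wₙ, where μₙ := ‖y − 𝓐(Xₙ)‖₁ / ‖Wₙ‖_F² if Wₙ ≠ 0 and μₙ := 0 otherwise. Then, with ρ := 1 − (3 − 2√2)/(10·γ²) (which lies in (0,1)), one has ‖X − Xₙ‖_F ≤ ρⁿ·‖X‖_F for all n ≥ 0; in particular, the sequence (Xₙ) converges to X. -/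
noncomputable def frobNorm {N₁ N₂ : ℕ} (Z : Matrix (Fin N₁) (Fin N₂) ℝ) : ℝ :=
  Real.sqrt (∑ i, ∑ j, (Z i j) ^ 2)

def frobInner {N₁ N₂ : ℕ} (A B : Matrix (Fin N₁) (Fin N₂) ℝ) : ℝ :=
  ∑ i, ∑ j, A i j * B i j

def l1norm {m : ℕ} (v : Fin m → ℝ) : ℝ := ∑ i, |v i|

noncomputable def sgnVec {m : ℕ} (v : Fin m → ℝ) : Fin m → ℝ := fun i => Real.sign (v i)

def IsBestRankApprox {N₁ N₂ : ℕ} (k : ℕ) (Z H : Matrix (Fin N₁) (Fin N₂) ℝ) : Prop :=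
  H.rank ≤ k ∧
    ∀ W : Matrix (Fin N₁) (Fin N₂) ℝ, W.rank ≤ k → frobNorm (Z - H) ≤ frobNorm (Z - W)
lemma my_sq_le {a b : ℝ} (h : a ^ 2 ≤ b ^ 2) (hb : 0 ≤ b) : a ≤ b :=
  le_of_abs_le ((sq_le_sq.1 h).trans_eq (abs_of_nonneg hb))

lemma mat_rank_add {n p : ℕ} (A B : Matrix (Fin n) (Fin p) ℝ) :
    (A + B).rank ≤ A.rank + B.rank := by
  unfold Matrix.rank
  rw [Matrix.mulVecLin_add]
  refine le_trans (Submodule.finrank_mono ?_)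
    (Submodule.finrank_add_le_finrank_add_finrank _ _)
  rintro _ ⟨x, rfl⟩
  exact Submodule.add_mem_sup ⟨x, rfl⟩ ⟨x, rfl⟩

open Matrix in
lemma fi_trace {n p : ℕ} (A B : Matrix (Fin n) (Fin p) ℝ) :
    frobInner A B = (Aᵀ * B).trace := by
  simp only [frobInner, Matrix.trace, Matrix.diag, Matrix.mul_apply, Matrix.transpose_apply]
  exact Finset.sum_comm

open Matrix in
lemma fi_adj {n p q : ℕ} (P : Matrix (Fin n) (Fin q) ℝ) (A : Matrix (Fin q) (Fin p) ℝ)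
    (B : Matrix (Fin n) (Fin p) ℝ) :
    frobInner (P * A) B = frobInner A (Pᵀ * B) := by
  simp only [fi_trace, Matrix.transpose_mul, Matrix.mul_assoc]

lemma fi_comm {n p : ℕ} (A B : Matrix (Fin n) (Fin p) ℝ) : frobInner A B = frobInner B A := by
  simp only [frobInner, mul_comm]

lemma fi_add_left {n p : ℕ} (A B C : Matrix (Fin n) (Fin p) ℝ) :
    frobInner (A + B) C = frobInner A C + frobInner B C := by
  simp [frobInner, add_mul, Finset.sum_add_distrib]

lemma fi_sub_left {n p : ℕ} (A B C : Matrix (Fin n) (Fin p) ℝ) :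
    frobInner (A - B) C = frobInner A C - frobInner B C := by
  simp [frobInner, sub_mul, Finset.sum_sub_distrib]

lemma fi_smul_left {n p : ℕ} (c : ℝ) (A C : Matrix (Fin n) (Fin p) ℝ) :
    frobInner (c • A) C = c * frobInner A C := by
  simp [frobInner, Finset.mul_sum, mul_assoc]

lemma fi_add_right {n p : ℕ} (A B C : Matrix (Fin n) (Fin p) ℝ) :
    frobInner C (A + B) = frobInner C A + frobInner C B := by
  simp only [fi_comm C, fi_add_left]

lemma fi_sub_right {n p : ℕ} (A B C : Matrix (Fin n) (Fin p) ℝ) :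
    frobInner C (A - B) = frobInner C A - frobInner C B := by
  simp only [fi_comm C, fi_sub_left]

lemma fi_smul_right {n p : ℕ} (c : ℝ) (A C : Matrix (Fin n) (Fin p) ℝ) :
    frobInner C (c • A) = c * frobInner C A := by
  simp only [fi_comm C, fi_smul_left]

lemma fi_zero_right {n p : ℕ} (A : Matrix (Fin n) (Fin p) ℝ) : frobInner A 0 = 0 := by
  simp [frobInner]

lemma fi_zero_left {n p : ℕ} (A : Matrix (Fin n) (Fin p) ℝ) : frobInner 0 A = 0 := by
  simp [frobInner]

lemma fi_nonneg {n p : ℕ} (A : Matrix (Fin n) (Fin p) ℝ) : 0 ≤ frobInner A A :=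
  Finset.sum_nonneg fun _ _ => Finset.sum_nonneg fun _ _ => mul_self_nonneg _

lemma frob_sq {n p : ℕ} (A : Matrix (Fin n) (Fin p) ℝ) : frobNorm A ^ 2 = frobInner A A := by
  have h : (∑ i, ∑ j, (A i j) ^ 2) = frobInner A A := by simp only [frobInner, sq]
  rw [frobNorm, h, Real.sq_sqrt (fi_nonneg A)]

lemma frob_nonneg {n p : ℕ} (A : Matrix (Fin n) (Fin p) ℝ) : 0 ≤ frobNorm A :=
  Real.sqrt_nonneg _

lemma fi_self_zero {n p : ℕ} (A : Matrix (Fin n) (Fin p) ℝ) (h : frobInner A A = 0) :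
    A = 0 := by
  ext i j
  have h1 := (Finset.sum_eq_zero_iff_of_nonneg
    (fun i _ => Finset.sum_nonneg fun j _ => mul_self_nonneg (A i j))).1 h i (Finset.mem_univ _)
  have h2 := (Finset.sum_eq_zero_iff_of_nonneg
    (fun j _ => mul_self_nonneg (A i j))).1 h1 j (Finset.mem_univ _)
  simpa using h2

lemma fi_cs {n p : ℕ} (A B : Matrix (Fin n) (Fin p) ℝ) :
    frobInner A B ^ 2 ≤ frobInner A A * frobInner B B := by
  have := Finset.sum_mul_sq_le_sq_mul_sq (Finset.univ : Finset (Fin n × Fin p))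
    (fun x => A x.1 x.2) (fun x => B x.1 x.2)
  simpa [frobInner, Fintype.sum_prod_type, sq] using this

lemma best_sq {n p k : ℕ} {Z H : Matrix (Fin n) (Fin p) ℝ} (h : IsBestRankApprox k Z H)
    (W : Matrix (Fin n) (Fin p) ℝ) (hW : W.rank ≤ k) :
    frobInner (Z - H) (Z - H) ≤ frobInner (Z - W) (Z - W) := by
  rw [← frob_sq, ← frob_sq]
  exact pow_le_pow_left₀ (frob_nonneg _) (h.2 W hW) 2

lemma quad_zero (a b : ℝ) (h : ∀ c : ℝ, 0 ≤ c ^ 2 * b - 2 * c * a) : a = 0 := by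
  have hb : 0 ≤ b := by nlinarith [h 1, h (-1)]
  have h1 := h (a / (b + 1))
  have h2 : (a / (b + 1)) ^ 2 * b - 2 * (a / (b + 1)) * a = - (a ^ 2 * (b + 2)) / (b + 1) ^ 2 := by
    field_simp; ring
  rw [h2, le_div_iff₀ (by positivity)] at h1
  have : a ^ 2 = 0 := by nlinarith [sq_nonneg a, mul_nonneg (sq_nonneg a) hb]
  simpa using this

open Matrix in
lemma best_orth {n p k : ℕ} {Z H : Matrix (Fin n) (Fin p) ℝ} (h : IsBestRankApprox k Z H) :
    Hᵀ * (Z - H) = 0 := by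
  apply fi_self_zero
  set N := Z - H with hN
  apply quad_zero _ (frobInner (H * (Hᵀ * N)) (H * (Hᵀ * N)))
  intro c
  have h1 := best_sq h (H * (1 + c • (Hᵀ * N))) ((Matrix.rank_mul_le_left _ _).trans h.1)
  have h2 : Z - H * (1 + c • (Hᵀ * N)) = N - c • (H * (Hᵀ * N)) := by
    rw [hN, Matrix.mul_add, Matrix.mul_smul, Matrix.mul_one]; abel
  rw [h2, ← hN] at h1
  have h3 : frobInner (H * (Hᵀ * N)) N = frobInner (Hᵀ * N) (Hᵀ * N) := fi_adj _ _ _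
  simp only [fi_sub_left, fi_sub_right, fi_smul_left, fi_smul_right, (fi_comm N _).trans h3, h3] at h1
  linarith

open Matrix in
lemma onb_sub {n : ℕ} (V : Submodule ℝ (Fin n → ℝ)) (d : ℕ) (hdV : Module.finrank ℝ V = d) :
    ∃ E : Matrix (Fin n) (Fin d) ℝ, Eᵀ * E = 1 ∧
      (∀ j, (fun i => E i j) ∈ V) ∧ ∀ v ∈ V, E *ᵥ (Eᵀ *ᵥ v) = v := by
  let f : (Fin n → ℝ) ≃ₗ[ℝ] EuclideanSpace ℝ (Fin n) := (WithLp.linearEquiv 2 ℝ (Fin n → ℝ)).symm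
  let V' : Submodule ℝ (EuclideanSpace ℝ (Fin n)) := V.map (f : (Fin n → ℝ) →ₗ[ℝ] _)
  have hd : Module.finrank ℝ V' = d := (LinearEquiv.finrank_map_eq f V).trans hdV
  let b : OrthonormalBasis (Fin d) ℝ V' :=
    (stdOrthonormalBasis ℝ V').reindex (finCongr hd)
  have hmem : ∀ j, (fun i => (b j : EuclideanSpace ℝ (Fin n)) i) ∈ V := by
    intro j
    obtain ⟨v, hv, hv'⟩ := (b j).2
    rw [← hv']
    exact hv
  refine ⟨Matrix.of fun i j => (b j : EuclideanSpace ℝ (Fin n)) i, ?_, hmem, ?_⟩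
  · ext i j
    have := orthonormal_iff_ite.1 b.orthonormal i j
    rw [Submodule.coe_inner, PiLp.inner_apply] at this
    simp only [Matrix.mul_apply, Matrix.transpose_apply, Matrix.of_apply, Matrix.one_apply]
    rw [← this]
    apply Finset.sum_congr rfl
    intro x _
    simp [mul_comm]
  · intro v hv
    let v' : V' := ⟨f v, v, hv, rfl⟩
    have h := b.sum_repr' v'
    have h' := congrArg (fun z : V' => (z : EuclideanSpace ℝ (Fin n))) h
    ext i
    have h2 := congrArg (fun z : EuclideanSpace ℝ (Fin n) => z i) h'
    simp only [Submodule.coe_sum, Submodule.coe_smul, Submodule.coe_inner, PiLp.inner_apply] at h2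
    have h3 : (v' : EuclideanSpace ℝ (Fin n)) i = v i := rfl
    rw [h3] at h2
    rw [← h2]
    simp only [Matrix.mulVec, dotProduct, Matrix.transpose_apply, Matrix.of_apply]
    simp only [WithLp.ofLp_sum, WithLp.ofLp_smul, Finset.sum_apply, Pi.smul_apply, smul_eq_mul]
    apply Finset.sum_congr rfl
    intro x _
    rw [mul_comm]
    congr 1
    apply Finset.sum_congr rfl
    intro z _
    simp only [RCLike.inner_apply, conj_trivial]
    rw [mul_comm]
    rfl

open Matrix in
lemma onb_col {n p : ℕ} (H : Matrix (Fin n) (Fin p) ℝ) :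
    ∃ E : Matrix (Fin n) (Fin H.rank) ℝ, Eᵀ * E = 1 ∧ E * (Eᵀ * H) = H ∧
      ∃ K : Matrix (Fin p) (Fin H.rank) ℝ, E = H * K := by
  obtain ⟨E, h1, h2, h3⟩ := onb_sub (LinearMap.range H.mulVecLin) H.rank rfl
  refine ⟨E, h1, ?_, ?_⟩
  · ext i j
    have := h3 (H *ᵥ (Pi.single j 1)) ⟨Pi.single j 1, rfl⟩
    have h4 := congrFun this i
    rw [Matrix.mulVec_mulVec, Matrix.mulVec_mulVec] at h4
    simpa [Matrix.mul_assoc] using h4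
  · choose k hk using h2
    refine ⟨Matrix.of fun i j => k j i, ?_⟩
    ext i j
    have := congrFun (hk j) i
    simp only [Matrix.mulVecLin_apply, Matrix.mulVec, dotProduct] at this
    rw [Matrix.mul_apply]
    exact this.symm

open Matrix in
lemma onb_ker {s p : ℕ} (B : Matrix (Fin p) (Fin s) ℝ) :
    ∃ d : ℕ, d + B.rank = s ∧ ∃ C : Matrix (Fin s) (Fin d) ℝ, Cᵀ * C = 1 ∧ B * C = 0 := by
  obtain ⟨C, h1, h2, -⟩ := onb_sub (LinearMap.ker B.mulVecLin) _ rfl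
  refine ⟨_, ?_, C, h1, ?_⟩
  · have := LinearMap.finrank_range_add_finrank_ker B.mulVecLin
    simp only [Module.finrank_fin_fun] at this
    rw [add_comm]; exact this
  · ext i j
    have := congrFun (LinearMap.mem_ker.1 (h2 j)) i
    simpa [Matrix.mulVec, dotProduct, Matrix.mul_apply] using this

open Matrix in
/-- Bessel-type identity. -/
lemma fi_proj {n p k : ℕ} (F : Matrix (Fin n) (Fin k) ℝ) (hF : Fᵀ * F = 1)
    (M : Matrix (Fin n) (Fin p) ℝ) :
    frobInner (M - F * (Fᵀ * M)) (M - F * (Fᵀ * M)) =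
      frobInner M M - frobInner (Fᵀ * M) (Fᵀ * M) := by
  have h1 : frobInner (F * (Fᵀ * M)) M = frobInner (Fᵀ * M) (Fᵀ * M) := fi_adj _ _ _
  have h2 : frobInner (F * (Fᵀ * M)) (F * (Fᵀ * M)) = frobInner (Fᵀ * M) (Fᵀ * M) := by
    rw [fi_adj, ← Matrix.mul_assoc Fᵀ F, hF, Matrix.one_mul]
  simp only [fi_sub_left, fi_sub_right, (fi_comm M _).trans h1, h1, h2]
  ring

open Matrix in
/-- Decomposition of the squared norm by rows. -/
lemma fi_rows {n p k : ℕ} (F : Matrix (Fin n) (Fin k) ℝ) (M : Matrix (Fin n) (Fin p) ℝ) :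
    frobInner (Fᵀ * M) (Fᵀ * M) = ∑ j : Fin k,
      frobInner ((F.submatrix id (fun _ : Fin 1 => j))ᵀ * M)
        ((F.submatrix id (fun _ : Fin 1 => j))ᵀ * M) := by
  simp [frobInner, Matrix.mul_apply]

open Matrix in
lemma col_unit {n k : ℕ} (F : Matrix (Fin n) (Fin k) ℝ) (hF : Fᵀ * F = 1) (j : Fin k) :
    (F.submatrix id (fun _ : Fin 1 => j))ᵀ * (F.submatrix id (fun _ : Fin 1 => j)) = 1 := by
  ext a b
  have := congrFun (congrFun hF j) j
  simp only [Matrix.mul_apply, Matrix.transpose_apply, Matrix.one_apply_eq] at this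
  rw [Subsingleton.elim a b]
  simp [Matrix.mul_apply, this]

open Matrix in
lemma rank_drop {s : ℕ} (c : Matrix (Fin s) (Fin 1) ℝ) (hc : cᵀ * c = 1) :
    (1 - c * cᵀ).rank < s := by
  by_contra hcon
  push Not at hcon
  have h1 := Matrix.rank_le_width (1 - c * cᵀ)
  have h3 : (1 - c * cᵀ) * c = 0 := by
    rw [Matrix.sub_mul, Matrix.mul_assoc, hc]; simp
  have h2 : Module.finrank ℝ (LinearMap.ker (1 - c * cᵀ).mulVecLin) = 0 := by
    have := LinearMap.finrank_range_add_finrank_ker (1 - c * cᵀ).mulVecLin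
    simp only [Module.finrank_fin_fun] at this
    have h5 : Module.finrank ℝ (LinearMap.range (1 - c * cᵀ).mulVecLin) = (1 - c * cᵀ).rank := rfl
    omega
  rw [Submodule.finrank_eq_zero] at h2
  have h4 : c = 0 := by
    have hm : (fun i => c i 0) ∈ LinearMap.ker (1 - c * cᵀ).mulVecLin := by
      rw [LinearMap.mem_ker]
      ext i
      have := congrFun (congrFun h3 i) 0
      rw [Matrix.mul_apply] at this
      exact this
    rw [h2, Submodule.mem_bot] at hm
    ext i j
    rw [Subsingleton.elim j 0]
    exact congrFun hm i
  rw [h4] at hc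
  have := congrFun (congrFun hc 0) 0
  simp at this

open Matrix in
/-- Swapping a rank-one piece. -/
lemma swap_bound {n p k : ℕ} {Z H : Matrix (Fin n) (Fin p) ℝ} (h : IsBestRankApprox k Z H)
    (e u : Matrix (Fin n) (Fin 1) ℝ) (hu : uᵀ * u = 1) (hHu : Hᵀ * u = 0)
    (he : e = 0 ∨ eᵀ * e = 1) (heH : ∃ K : Matrix (Fin p) (Fin 1) ℝ, e = H * K)
    (hr : (H - e * (eᵀ * H)).rank + 1 ≤ k) :
    frobInner (uᵀ * (Z - H)) (uᵀ * (Z - H)) ≤ frobInner (eᵀ * H) (eᵀ * H) := by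
  have ho := best_orth h
  have hu1 : (u * (uᵀ * (Z - H))).rank ≤ 1 :=
    (Matrix.rank_mul_le_left _ _).trans (by simpa using Matrix.rank_le_width u)
  have h1 := best_sq h (H - e * (eᵀ * H) + u * (uᵀ * (Z - H)))
    ((mat_rank_add _ _).trans (by omega))
  set N := Z - H with hN
  have h2 : Z - (H - e * (eᵀ * H) + u * (uᵀ * N)) = N + e * (eᵀ * H) - u * (uᵀ * N) := by
    rw [hN]; abel
  rw [h2] at h1
  obtain ⟨K, hK⟩ := heH
  have heN : eᵀ * N = 0 := by
    rw [hK, Matrix.transpose_mul, Matrix.mul_assoc, ho, Matrix.mul_zero]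
  have heu : eᵀ * u = 0 := by
    rw [hK, Matrix.transpose_mul, Matrix.mul_assoc, hHu, Matrix.mul_zero]
  have a1 : frobInner (e * (eᵀ * H)) N = 0 := by rw [fi_adj, heN, fi_zero_right]
  have a2 : frobInner (u * (uᵀ * N)) N = frobInner (uᵀ * N) (uᵀ * N) := fi_adj _ _ _
  have a3 : frobInner (u * (uᵀ * N)) (u * (uᵀ * N)) = frobInner (uᵀ * N) (uᵀ * N) := by
    rw [fi_adj, ← Matrix.mul_assoc uᵀ u, hu, Matrix.one_mul]
  have a4 : frobInner (e * (eᵀ * H)) (u * (uᵀ * N)) = 0 := by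
    rw [fi_adj, ← Matrix.mul_assoc eᵀ u, heu, Matrix.zero_mul, fi_zero_right]
  have a5 : frobInner (e * (eᵀ * H)) (e * (eᵀ * H)) = frobInner (eᵀ * H) (eᵀ * H) := by
    rw [fi_adj, ← Matrix.mul_assoc eᵀ e]
    rcases he with he | he
    · simp [he]
    · rw [he, Matrix.one_mul]
  have b1 := (fi_comm N _).trans a1
  have b2 := (fi_comm N _).trans a2
  have b4 := (fi_comm _ _).trans a4
  simp only [fi_sub_left, fi_sub_right, fi_add_left, fi_add_right,
    a1, a2, a3, a4, a5, b1, b2, b4] at h1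
  linarith

open Matrix in
lemma tau_bound {n p k r : ℕ} {Z H X : Matrix (Fin n) (Fin p) ℝ} (h : IsBestRankApprox k Z H)
    (hX : X.rank ≤ r) (hrk : r < k)
    (u : Matrix (Fin n) (Fin 1) ℝ) (hu : uᵀ * u = 1) (hHu : Hᵀ * u = 0) :
    frobInner (uᵀ * (Z - H)) (uᵀ * (Z - H)) * ((k : ℝ) - r) ≤ frobInner (X - H) (X - H) := by
  have hkr : (0 : ℝ) < (k : ℝ) - r := by
    have : (r : ℝ) < k := by exact_mod_cast hrk
    linarith
  rcases lt_or_eq_of_le h.1 with hlt | heq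
  · have := swap_bound h 0 u hu hHu (Or.inl rfl) ⟨0, by simp⟩ (by simpa using hlt)
    simp only [Matrix.transpose_zero, Matrix.zero_mul, fi_zero_left] at this
    nlinarith [fi_nonneg (X - H)]
  · obtain ⟨E, hE, hEH, K, hK⟩ := onb_col H
    obtain ⟨d, hd, C, hC, hBC⟩ := onb_ker (Xᵀ * E)
    have hrB : (Xᵀ * E).rank ≤ r := by
      refine (Matrix.rank_mul_le_left _ _).trans ?_
      rwa [Matrix.rank_transpose]
    have hF : (E * C)ᵀ * (E * C) = 1 := by
      rw [Matrix.transpose_mul, Matrix.mul_assoc, ← Matrix.mul_assoc Eᵀ, hE, Matrix.one_mul, hC]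
    have hFX : (E * C)ᵀ * X = 0 := by
      have : ((E * C)ᵀ * X)ᵀ = 0 := by
        rw [Matrix.transpose_mul, Matrix.transpose_transpose, ← Matrix.mul_assoc, hBC]
      rw [← Matrix.transpose_transpose ((E * C)ᵀ * X), this, Matrix.transpose_zero]
    have hs : (d : ℝ) * frobInner (uᵀ * (Z - H)) (uᵀ * (Z - H)) ≤
        frobInner ((E * C)ᵀ * H) ((E * C)ᵀ * H) := by
      rw [fi_rows (E * C)]
      have : (d : ℝ) * frobInner (uᵀ * (Z - H)) (uᵀ * (Z - H)) =
        ∑ j : Fin d, frobInner (uᵀ * (Z - H)) (uᵀ * (Z - H)) := by simp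
      rw [this]
      apply Finset.sum_le_sum
      intro j _
      set c := C.submatrix id (fun _ : Fin 1 => j) with hc
      have hcc : cᵀ * c = 1 := col_unit C hC j
      have hec : (E * C).submatrix id (fun _ : Fin 1 => j) = E * c := by
        ext a b; simp [hc, Matrix.mul_apply]
      refine swap_bound h _ u hu hHu (Or.inr (col_unit _ hF j)) ⟨K * c, ?_⟩ ?_
      · rw [hec, ← Matrix.mul_assoc, ← hK]
      · have hh : H - E * c * ((E * c)ᵀ * H) = E * ((1 - c * cᵀ) * (Eᵀ * H)) := by
          rw [Matrix.sub_mul, Matrix.mul_sub, Matrix.one_mul, hEH, Matrix.transpose_mul]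
          simp only [Matrix.mul_assoc]
        rw [hec, hh]
        have hr1 := rank_drop c hcc
        have hr2 := Matrix.rank_mul_le_right E ((1 - c * cᵀ) * (Eᵀ * H))
        have hr3 := Matrix.rank_mul_le_left (1 - c * cᵀ) (Eᵀ * H)
        omega
    have h5 : (E * C)ᵀ * H = - ((E * C)ᵀ * (X - H)) := by
      rw [Matrix.mul_sub, hFX]; simp
    have h6 := fi_proj (E * C) hF (X - H)
    have h7 := fi_nonneg (X - H - (E * C) * ((E * C)ᵀ * (X - H)))
    have h8 : frobInner ((E * C)ᵀ * H) ((E * C)ᵀ * H) =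
        frobInner ((E * C)ᵀ * (X - H)) ((E * C)ᵀ * (X - H)) := by
      rw [h5]; simp [frobInner]
    have hdk : (k : ℝ) - r ≤ d := by
      have : k ≤ d + r := by omega
      have : (k : ℝ) ≤ d + r := by exact_mod_cast this
      linarith
    nlinarith [fi_nonneg (uᵀ * (Z - H))]

open Matrix in
lemma main_ip {n p k r q : ℕ} {Z H X M : Matrix (Fin n) (Fin p) ℝ} (h : IsBestRankApprox k Z H)
    (hX : X.rank ≤ r) (hrk : r < k) (hM : M.rank ≤ q) (a : ℝ) :
    frobInner M (Z - H) ^ 2 * ((k : ℝ) - r) ≤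
      q * (frobInner (M - a • H) (M - a • H) * frobInner (X - H) (X - H)) := by
  have hkr : (0 : ℝ) < (k : ℝ) - r := by
    have : (r : ℝ) < k := by exact_mod_cast hrk
    linarith
  have ho := best_orth h
  obtain ⟨E, hE, hEH, K, hK⟩ := onb_col H
  set N := Z - H with hN
  have hEN : Eᵀ * N = 0 := by
    rw [hK, Matrix.transpose_mul, Matrix.mul_assoc, ho, Matrix.mul_zero]
  set M' := M - E * (Eᵀ * M) with hM'
  have e1 : frobInner M N = frobInner M' N := by
    rw [hM', fi_sub_left, fi_adj, hEN, fi_zero_right, sub_zero]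
  have e2 : M' = (M - a • H) - E * (Eᵀ * (M - a • H)) := by
    rw [Matrix.mul_sub, Matrix.mul_sub, Matrix.mul_smul, Matrix.mul_smul, hEH, hM']; abel
  have e3 : frobInner M' M' ≤ frobInner (M - a • H) (M - a • H) := by
    rw [e2, fi_proj E hE]
    linarith [fi_nonneg (Eᵀ * (M - a • H))]
  have e4 : M'.rank ≤ q := by
    have : M' = (1 - E * Eᵀ) * M := by rw [Matrix.sub_mul, Matrix.one_mul, Matrix.mul_assoc]
    rw [this]
    exact (Matrix.rank_mul_le_right _ _).trans hM
  have hHE : Hᵀ * E * Eᵀ = Hᵀ := by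
    have := congrArg Matrix.transpose hEH
    simpa [Matrix.transpose_mul] using this
  have e5 : Hᵀ * M' = 0 := by
    rw [hM', Matrix.mul_sub, ← Matrix.mul_assoc, ← Matrix.mul_assoc, hHE, sub_self]
  obtain ⟨F, hF, hFM, K', hK'⟩ := onb_col M'
  have e6 : frobInner M' N ^ 2 ≤ frobInner (Fᵀ * M') (Fᵀ * M') * frobInner (Fᵀ * N) (Fᵀ * N) := by
    conv_lhs => rw [← hFM, fi_adj]
    exact fi_cs _ _
  have e7 : frobInner (Fᵀ * M') (Fᵀ * M') ≤ frobInner M' M' := by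
    have := fi_proj F hF M'
    linarith [fi_nonneg (M' - F * (Fᵀ * M'))]
  have e8 : frobInner (Fᵀ * N) (Fᵀ * N) * ((k : ℝ) - r) ≤ q * frobInner (X - H) (X - H) := by
    rw [fi_rows, Finset.sum_mul]
    calc _ ≤ ∑ j : Fin M'.rank, frobInner (X - H) (X - H) := by
          apply Finset.sum_le_sum
          intro j _
          refine tau_bound h hX hrk _ (col_unit F hF j) ?_
          have hHF : Hᵀ * F = 0 := by rw [hK', ← Matrix.mul_assoc, e5, Matrix.zero_mul]
          ext a b
          have := congrFun (congrFun hHF a) j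
          simpa [Matrix.mul_apply] using this
      _ = (M'.rank : ℝ) * frobInner (X - H) (X - H) := by simp
      _ ≤ _ := by
          apply mul_le_mul_of_nonneg_right _ (fi_nonneg _)
          exact_mod_cast e4
  rw [e1]
  calc frobInner M' N ^ 2 * ((k : ℝ) - r)
      ≤ frobInner (Fᵀ * M') (Fᵀ * M') * frobInner (Fᵀ * N) (Fᵀ * N) * ((k : ℝ) - r) :=
        mul_le_mul_of_nonneg_right e6 hkr.le
    _ = frobInner (Fᵀ * M') (Fᵀ * M') * (frobInner (Fᵀ * N) (Fᵀ * N) * ((k : ℝ) - r)) := by ring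
    _ ≤ frobInner (M - a • H) (M - a • H) * (q * frobInner (X - H) (X - H)) :=
        mul_le_mul (e7.trans e3) e8 (mul_nonneg (fi_nonneg _) hkr.le) (fi_nonneg _)
    _ = _ := by ring

lemma sgn_self {m : ℕ} (v : Fin m → ℝ) : ∑ i, sgnVec v i * v i = l1norm v := by
  unfold l1norm sgnVec
  apply Finset.sum_congr rfl
  intro i _
  rcases lt_trichotomy (v i) 0 with h | h | h
  · rw [Real.sign_of_neg h, abs_of_neg h]; ring
  · simp [h]
  · rw [Real.sign_of_pos h, abs_of_pos h]; ring

lemma sgn_le {m : ℕ} (v w : Fin m → ℝ) : ∑ i, sgnVec v i * w i ≤ l1norm w := by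
  unfold l1norm sgnVec
  apply Finset.sum_le_sum
  intro i _
  rcases Real.sign_apply_eq (v i) with h | h | h <;> rw [h]
  · simpa using neg_le_abs (w i)
  · simp
  · simpa using le_abs_self (w i)

/-- Hard thresholding is nearly nonexpansive towards low-rank matrices. -/
lemma threshold_bound {n p s r : ℕ} {Z H X : Matrix (Fin n) (Fin p) ℝ} (γ : ℝ) (hγ : 1 ≤ γ)
    (hr : 0 < r) (hs : (s : ℝ) = 100 * γ ^ 4 * r) (h : IsBestRankApprox s Z H)
    (hX : X.rank ≤ r) :
    frobInner (X - H) (X - H) * (1 - 2 / (9 * γ ^ 2)) ≤ frobInner (X - Z) (X - Z) := by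
  have hγ4 : 1 ≤ γ ^ 4 := one_le_pow₀ hγ
  have hr' : (0 : ℝ) < r := by exact_mod_cast hr
  have hsr : 81 * γ ^ 4 * r ≤ (s : ℝ) - r := by rw [hs]; nlinarith
  have hrs : r < s := by
    have : (r : ℝ) < s := by nlinarith
    exact_mod_cast this
  have h1 := main_ip h hX hrs hX 1
  rw [one_smul] at h1
  have hHN : frobInner H (Z - H) = 0 := by
    have := fi_adj H 1 (Z - H)
    rwa [best_orth h, fi_zero_right, Matrix.mul_one] at this
  set q := frobInner (X - H) (X - H) with hq
  set c := frobInner X (Z - H) with hc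
  have hq0 : 0 ≤ q := fi_nonneg _
  have h2 : c ^ 2 * (81 * γ ^ 4) ≤ q * q := by
    have : c ^ 2 * (81 * γ ^ 4 * r) ≤ r * (q * q) :=
      (mul_le_mul_of_nonneg_left hsr (sq_nonneg c)).trans h1
    have h' : (c ^ 2 * (81 * γ ^ 4)) * r ≤ (q * q) * r := by linarith
    exact le_of_mul_le_mul_right h' hr'
  have h3 : c * (9 * γ ^ 2) ≤ q := by
    apply my_sq_le _ hq0
    calc (c * (9 * γ ^ 2)) ^ 2 = c ^ 2 * (81 * γ ^ 4) := by ring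
      _ ≤ q ^ 2 := by rw [sq q]; exact h2
  have h4 : c ≤ q / (9 * γ ^ 2) := (le_div_iff₀ (by positivity)).2 h3
  have h5 : frobInner (X - Z) (X - Z) = q + frobInner (Z - H) (Z - H) - 2 * c := by
    have : X - Z = (X - H) - (Z - H) := by abel
    rw [this]
    have e : frobInner (X - H) (Z - H) = c := by rw [fi_sub_left, hHN, sub_zero]
    have e' := (fi_comm _ _).trans e
    rw [fi_sub_left, fi_sub_right (X - H) (Z - H) (X - H), fi_sub_right (X - H) (Z - H) (Z - H), e, e', ← hq]
    ring
  rw [h5]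
  have h6 : q * (1 - 2 / (9 * γ ^ 2)) = q - 2 * (q / (9 * γ ^ 2)) := by ring
  rw [h6]
  linarith [fi_nonneg (Z - H)]

lemma gradient_bound {N₁ N₂ m : ℕ}
    (r s t : ℕ) (hr : 0 < r) (γ : ℝ) (hγ : 1 ≤ γ)
    (hs : (s : ℝ) = 100 * γ ^ 4 * r) (ht : (t : ℝ) = 800 * γ ^ 12 * s)
    (A : Matrix (Fin N₁) (Fin N₂) ℝ →ₗ[ℝ] (Fin m → ℝ))
    (Astar : (Fin m → ℝ) →ₗ[ℝ] Matrix (Fin N₁) (Fin N₂) ℝ)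
    (hadj : ∀ (u : Fin m → ℝ) (Z : Matrix (Fin N₁) (Fin N₂) ℝ),
      frobInner (Astar u) Z = ∑ i, u i * A Z i)
    (α β : ℝ) (hα : 0 < α) (hαβ : α ≤ β) (hratio : β / α ≤ γ)
    (hRIP : ∀ Z : Matrix (Fin N₁) (Fin N₂) ℝ, Z.rank ≤ t + s + r →
      α * frobNorm Z ≤ l1norm (A Z) ∧ l1norm (A Z) ≤ β * frobNorm Z)
    (M W : Matrix (Fin N₁) (Fin N₂) ℝ) (hM : M.rank ≤ s + r)
    (hW : IsBestRankApprox t (Astar (sgnVec (A M))) W) (μ : ℝ)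
    (hμ : (W = 0 ∧ μ = 0) ∨ (W ≠ 0 ∧ μ = l1norm (A M) / frobNorm W ^ 2)) :
    frobInner (M - μ • W) (M - μ • W) ≤ frobInner M M * (1 - 9 / 10 / γ ^ 2) := by
  have hγ4 : 1 ≤ γ ^ 4 := one_le_pow₀ hγ
  have hγ0 : 0 < γ := by linarith
  have hr' : (0 : ℝ) < r := by exact_mod_cast hr
  have hs0 : (0 : ℝ) < s := by rw [hs]; positivity
  have ht0' : (0 : ℝ) < t := by rw [ht]; positivity
  have ht0 : 0 < t := by exact_mod_cast ht0'
  have hrs : (r : ℝ) ≤ s := by rw [hs]; nlinarith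
  have hGM : frobInner M (Astar (sgnVec (A M))) = l1norm (A M) := by
    rw [fi_comm, hadj, sgn_self]
  have h1 := main_ip (X := 0) (r := 0) hW (by simp) ht0 hM 0
  have h0W : frobInner (0 - W) (0 - W) = frobInner W W := by simp [frobInner]
  rw [h0W, zero_smul, sub_zero, fi_sub_right, hGM] at h1
  have hWN : frobInner W (Astar (sgnVec (A M)) - W) = 0 := by
    have := fi_adj W 1 (Astar (sgnVec (A M)) - W)
    rwa [best_orth hW, fi_zero_right, Matrix.mul_one] at this
  obtain ⟨hL1, hL2⟩ := hRIP M (by omega)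
  have hw := (hRIP W (by have := hW.1; omega)).2
  have hWG : frobInner W W ≤ l1norm (A W) := by
    rw [fi_sub_right] at hWN
    have : frobInner W W = frobInner (Astar (sgnVec (A M))) W := by
      rw [fi_comm (Astar _) W]; linarith
    rw [this, hadj]
    exact sgn_le _ _
  have hβ : β ≤ γ * α := (div_le_iff₀ hα).1 hratio
  have hD := frob_sq M
  have hwsq := frob_sq W
  set D := frobNorm M with hDdef
  set w := frobNorm W with hwdef
  set L := l1norm (A M) with hLdef
  have hD0 : 0 ≤ D := frob_nonneg _
  have hw0 : 0 ≤ w := frob_nonneg _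
  have hL0 : 0 ≤ L := le_trans (by positivity) hL1
  rw [← hD, ← hwsq] at h1
  rw [← hD]
  rcases hμ with ⟨hW0, hμ⟩ | ⟨hW0, hμ⟩
  · subst hμ
    have hww : w ^ 2 = 0 := by rw [hwsq, hW0, fi_zero_right]
    rw [hww, hW0, fi_zero_right] at h1
    simp only [mul_zero, sub_zero, Nat.cast_zero] at h1
    have hL : L = 0 := by
      have : L ^ 2 ≤ 0 := by
        by_contra hcon
        push Not at hcon
        nlinarith
      have := le_antisymm this (sq_nonneg L)
      simpa using this
    have hDz : D = 0 := by
      rw [hL] at hL1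
      nlinarith
    rw [zero_smul, sub_zero, ← hD, hDz]
    simp
  · have hwpos : 0 < w := by
      rcases hw0.lt_or_eq with h | h
      · exact h
      · exact absurd (fi_self_zero W (by rw [← hwsq, ← h]; simp)) hW0
    have hwβ : w ≤ β := by
      have : w * w ≤ β * w := by rw [← sq, hwsq]; linarith
      exact le_of_mul_le_mul_right this hwpos
    set b := frobInner M W with hb
    -- the inner-product defect
    have hq : ((s + r : ℕ) : ℝ) * (400 * γ ^ 2) ≤ t := by
      push_cast
      rw [ht]
      have : γ ^ 2 ≤ γ ^ 12 := pow_le_pow_right₀ hγ (by norm_num)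
      have h2 : (s + r : ℝ) * (400 * γ ^ 2) ≤ (2 * s) * (400 * γ ^ 2) := by
        apply mul_le_mul_of_nonneg_right _ (by positivity); linarith
      nlinarith
    have h2 : (L - b) ^ 2 * (400 * γ ^ 2) ≤ D ^ 2 * w ^ 2 := by
      have h3 : (L - b) ^ 2 * t ≤ ((s + r : ℕ) : ℝ) * (D ^ 2 * w ^ 2) := by simpa using h1
      have h4 : ((L - b) ^ 2 * (400 * γ ^ 2)) * t ≤ (D ^ 2 * w ^ 2) * t := by
        calc ((L - b) ^ 2 * (400 * γ ^ 2)) * t = (400 * γ ^ 2) * ((L - b) ^ 2 * t) := by ring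
          _ ≤ (400 * γ ^ 2) * (((s + r : ℕ) : ℝ) * (D ^ 2 * w ^ 2)) :=
            mul_le_mul_of_nonneg_left h3 (by positivity)
          _ = (((s + r : ℕ) : ℝ) * (400 * γ ^ 2)) * (D ^ 2 * w ^ 2) := by ring
          _ ≤ t * (D ^ 2 * w ^ 2) := mul_le_mul_of_nonneg_right hq (by positivity)
          _ = _ := by ring
      exact le_of_mul_le_mul_right h4 ht0'
    have h3 : (L - b) * (20 * γ) ≤ D * w := by
      apply my_sq_le _ (by positivity)
      calc ((L - b) * (20 * γ)) ^ 2 = (L - b) ^ 2 * (400 * γ ^ 2) := by ring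
        _ ≤ (D * w) ^ 2 := by rw [mul_pow]; exact h2
    have hwL : D * w ≤ L * γ := by
      calc D * w ≤ D * (γ * α) := mul_le_mul_of_nonneg_left (hwβ.trans hβ) hD0
        _ = (α * D) * γ := by ring
        _ ≤ L * γ := mul_le_mul_of_nonneg_right hL1 hγ0.le
    have h4 : (L - b) * 20 ≤ L := by
      have : ((L - b) * 20) * γ ≤ L * γ := by linarith
      exact le_of_mul_le_mul_right this hγ0
    have h5 : frobInner (M - μ • W) (M - μ • W) = D ^ 2 - 2 * μ * b + μ ^ 2 * w ^ 2 := by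
      rw [fi_sub_left, fi_sub_right, fi_sub_right, fi_smul_left, fi_smul_left, fi_smul_right,
        fi_smul_right, fi_comm W M, ← hb, ← hD, ← hwsq]
      ring
    rw [h5]
    have hμ0 : 0 ≤ μ := by rw [hμ]; positivity
    have h6 : μ * w ^ 2 = L := by rw [hμ]; field_simp
    have h7 : D ^ 2 / γ ^ 2 ≤ μ * L := by
      rw [div_le_iff₀ (by positivity)]
      have : D ^ 2 * w ^ 2 ≤ (μ * L * γ ^ 2) * w ^ 2 := by
        calc D ^ 2 * w ^ 2 = (D * w) ^ 2 := by ring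
          _ ≤ (L * γ) ^ 2 := pow_le_pow_left₀ (by positivity) hwL 2
          _ = (μ * w ^ 2) * L * γ ^ 2 := by rw [h6]; ring
          _ = _ := by ring
      exact le_of_mul_le_mul_right this (by positivity)
    have h8 : μ ^ 2 * w ^ 2 = μ * L := by rw [← h6]; ring
    have h9 : D ^ 2 * (1 - 9 / 10 / γ ^ 2) = D ^ 2 - 9 / 10 * (D ^ 2 / γ ^ 2) := by ring
    rw [h8, h9]
    have h10 := mul_le_mul_of_nonneg_left h4 hμ0
    generalize D ^ 2 / γ ^ 2 = z at h7 ⊢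
    have h11 : μ * ((L - b) * 20) = 20 * (μ * L) - 20 * (μ * b) := by ring
    have h12 : 2 * μ * b = 2 * (μ * b) := by ring
    rw [h11] at h10
    rw [h12]
    linarith

lemma rho_facts (γ : ℝ) (hγ : 1 ≤ γ) :
    0 < (3 - 2 * Real.sqrt 2) / (10 * γ ^ 2) ∧
      (3 - 2 * Real.sqrt 2) / (10 * γ ^ 2) ≤ 1 / 50 / γ ^ 2 := by
  have h1 : Real.sqrt 2 < 1.5 := by
    rw [Real.sqrt_lt' (by norm_num)]; norm_num
  have h2 : 1.4 ≤ Real.sqrt 2 := Real.le_sqrt_of_sq_le (by norm_num)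
  have hg : 0 < γ ^ 2 := by positivity
  refine ⟨div_pos (by linarith) (by positivity), ?_⟩
  rw [div_div, div_le_div_iff₀ (by positivity) (by positivity)]
  nlinarith

lemma final_arith (γ q D2 κ : ℝ) (hγ : 1 ≤ γ) (hD2 : 0 ≤ D2) (hκ : κ ≤ 1 / 50 / γ ^ 2)
    (h : q * (1 - 2 / (9 * γ ^ 2)) ≤ D2 * (1 - 9 / 10 / γ ^ 2)) :
    q ≤ (1 - κ) ^ 2 * D2 := by
  have hg : 1 ≤ γ ^ 2 := one_le_pow₀ hγ
  obtain ⟨x, hx⟩ : ∃ x, x = 1 / γ ^ 2 := ⟨_, rfl⟩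
  have hx0 : 0 < x := by rw [hx]; positivity
  have hx1 : x ≤ 1 := by rw [hx, div_le_one (by positivity)]; exact hg
  have e1 : 2 / (9 * γ ^ 2) = 2 / 9 * x := by rw [hx]; field_simp
  have e2 : 9 / 10 / γ ^ 2 = 9 / 10 * x := by rw [hx]; ring
  have e3 : 1 / 50 / γ ^ 2 = 1 / 50 * x := by rw [hx]; ring
  rw [e1, e2] at h
  rw [e3] at hκ
  have h1 : 1 - 1 / 25 * x ≤ (1 - κ) ^ 2 := by nlinarith [sq_nonneg κ]
  have h2 : (1 - 9 / 10 * x) ≤ (1 - 1 / 25 * x) * (1 - 2 / 9 * x) := by nlinarith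
  have h3 : (1 - 9 / 10 * x) ≤ (1 - κ) ^ 2 * (1 - 2 / 9 * x) :=
    h2.trans (mul_le_mul_of_nonneg_right h1 (by linarith))
  have h4 : q * (1 - 2 / 9 * x) ≤ ((1 - κ) ^ 2 * D2) * (1 - 2 / 9 * x) := by
    calc _ ≤ D2 * (1 - 9 / 10 * x) := h
      _ ≤ D2 * ((1 - κ) ^ 2 * (1 - 2 / 9 * x)) := mul_le_mul_of_nonneg_left h3 hD2
      _ = _ := by ring
  exact le_of_mul_le_mul_right h4 (by linarith)

lemma abs_entry_le {n p : ℕ} (Z : Matrix (Fin n) (Fin p) ℝ) (i : Fin n) (j : Fin p) :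
    |Z i j| ≤ frobNorm Z := by
  apply my_sq_le _ (frob_nonneg Z)
  rw [sq_abs, frob_sq, frobInner, sq]
  exact (Finset.single_le_sum (f := fun j => Z i j * Z i j)
    (fun j _ => mul_self_nonneg _) (Finset.mem_univ j)).trans
    (Finset.single_le_sum (f := fun i => ∑ j, Z i j * Z i j)
      (fun i _ => Finset.sum_nonneg fun j _ => mul_self_nonneg _) (Finset.mem_univ i))

lemma neg_one_mul_mat {n p : ℕ} (B : Matrix (Fin n) (Fin p) ℝ) :
    (-1 : Matrix (Fin n) (Fin n) ℝ) * B = -B := by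
  rw [Matrix.neg_mul, Matrix.one_mul]

open scoped Classical

/-- Theorem 1 (idealized recovery): under the modified rank-restricted isometry property of
order t+s+r (s = 100γ⁴r, t = 800γ¹²s) with ratio β/α ≤ γ, the modified iterative hard
thresholding sequence started at X₀ = 0 with exact measurements y = 𝓐(X) of a matrix X of
rank at most r satisfies ‖X − Xₙ‖_F ≤ ρⁿ‖X‖_F with ρ := 1 − (3 − 2√2)/(10γ²) ∈ (0,1);
in particular Xₙ → X. -/
theorem stmt0 {N₁ N₂ m : ℕ} (hN₁ : 0 < N₁) (hN₂ : 0 < N₂) (hm : 0 < m)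
    (r s t : ℕ) (hr : 0 < r) (γ : ℝ) (hγ : 1 ≤ γ)
    (hs : (s : ℝ) = 100 * γ ^ 4 * r) (ht : (t : ℝ) = 800 * γ ^ 12 * s)
    (hdim : t + s + r ≤ min N₁ N₂)
    (A : Matrix (Fin N₁) (Fin N₂) ℝ →ₗ[ℝ] (Fin m → ℝ))
    (Astar : (Fin m → ℝ) →ₗ[ℝ] Matrix (Fin N₁) (Fin N₂) ℝ)
    (hadj : ∀ (u : Fin m → ℝ) (Z : Matrix (Fin N₁) (Fin N₂) ℝ),
      frobInner (Astar u) Z = ∑ i, u i * A Z i)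
    (α β : ℝ) (hα : 0 < α) (hαβ : α ≤ β) (hratio : β / α ≤ γ)
    (hRIP : ∀ Z : Matrix (Fin N₁) (Fin N₂) ℝ, Z.rank ≤ t + s + r →
      α * frobNorm Z ≤ l1norm (A Z) ∧ l1norm (A Z) ≤ β * frobNorm Z)
    (X : Matrix (Fin N₁) (Fin N₂) ℝ) (hX : X.rank ≤ r)
    (y : Fin m → ℝ) (hy : y = A X)
    (Xseq : ℕ → Matrix (Fin N₁) (Fin N₂) ℝ) (h0 : Xseq 0 = 0)
    (hstep : ∀ n : ℕ, ∃ W : Matrix (Fin N₁) (Fin N₂) ℝ,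
      IsBestRankApprox t (Astar (sgnVec (y - A (Xseq n)))) W ∧
      IsBestRankApprox s
        (Xseq n +
          (if W ≠ 0 then l1norm (y - A (Xseq n)) / frobNorm W ^ 2 else 0) • W)
        (Xseq (n + 1))) :
    (0 < 1 - (3 - 2 * Real.sqrt 2) / (10 * γ ^ 2) ∧
        1 - (3 - 2 * Real.sqrt 2) / (10 * γ ^ 2) < 1) ∧
      (∀ n : ℕ, frobNorm (X - Xseq n) ≤
        (1 - (3 - 2 * Real.sqrt 2) / (10 * γ ^ 2)) ^ n * frobNorm X) ∧
      Filter.Tendsto Xseq Filter.atTop (nhds X) := by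
  obtain ⟨hκ0, hκ1⟩ := rho_facts γ hγ
  set κ := (3 - 2 * Real.sqrt 2) / (10 * γ ^ 2) with hκ
  have hg : 1 ≤ γ ^ 2 := one_le_pow₀ hγ
  have hκ2 : κ ≤ 1 / 50 := by
    refine hκ1.trans ?_
    rw [div_le_iff₀ (by positivity)]
    linarith
  have hrk : ∀ n, (Xseq n).rank ≤ s := by
    intro n
    cases n with
    | zero => rw [h0]; simp
    | succ n =>
      obtain ⟨W, _, h⟩ := hstep n
      exact h.1
  have hmain : ∀ n, frobNorm (X - Xseq (n + 1)) ≤ (1 - κ) * frobNorm (X - Xseq n) := by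
    intro n
    obtain ⟨W, hW, hH⟩ := hstep n
    have hyA : y - A (Xseq n) = A (X - Xseq n) := by rw [hy, map_sub]
    rw [hyA] at hW hH
    have hM : (X - Xseq n).rank ≤ s + r := by
      have h1 := mat_rank_add X ((-1 : Matrix (Fin N₁) (Fin N₁) ℝ) * Xseq n)
      have h2 := Matrix.rank_mul_le_right (-1 : Matrix (Fin N₁) (Fin N₁) ℝ) (Xseq n)
      have h3 := hrk n
      rw [neg_one_mul_mat, ← sub_eq_add_neg] at h1
      rw [neg_one_mul_mat] at h2
      omega
    have h1 := threshold_bound γ hγ hr hs hH hX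
    set μ := (if W ≠ 0 then l1norm (A (X - Xseq n)) / frobNorm W ^ 2 else 0) with hμ
    have h2 := gradient_bound r s t hr γ hγ hs ht A Astar hadj α β hα hαβ hratio hRIP
      (X - Xseq n) W hM hW μ (by
        by_cases hW0 : W = 0
        · left; exact ⟨hW0, by rw [hμ, if_neg (by simpa using hW0)]⟩
        · right; exact ⟨hW0, by rw [hμ, if_pos hW0]⟩)
    have h3 : X - (Xseq n + μ • W) = X - Xseq n - μ • W := by abel
    rw [h3] at h1
    have h4 := final_arith γ _ _ κ hγ (fi_nonneg (X - Xseq n)) hκ1 (h1.trans h2)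
    apply my_sq_le _ (mul_nonneg (by linarith) (frob_nonneg _))
    rw [mul_pow, frob_sq, frob_sq]
    exact h4
  have hb : ∀ n : ℕ, frobNorm (X - Xseq n) ≤ (1 - κ) ^ n * frobNorm X := by
    intro n
    induction n with
    | zero => rw [h0]; simp
    | succ n ih =>
      calc _ ≤ (1 - κ) * frobNorm (X - Xseq n) := hmain n
        _ ≤ (1 - κ) * ((1 - κ) ^ n * frobNorm X) :=
          mul_le_mul_of_nonneg_left ih (by linarith)
        _ = _ := by ring
  refine ⟨⟨by linarith, by linarith⟩, hb, ?_⟩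
  have hz : Filter.Tendsto (fun n : ℕ => (1 - κ) ^ n * frobNorm X) Filter.atTop (nhds 0) := by
    have := (tendsto_pow_atTop_nhds_zero_of_lt_one (r := 1 - κ) (by linarith)
      (by linarith)).mul_const (frobNorm X)
    simpa using this
  refine tendsto_pi_nhds.2 fun i => tendsto_pi_nhds.2 fun j => ?_
  rw [tendsto_iff_dist_tendsto_zero]
  refine squeeze_zero (fun n => dist_nonneg) (fun n => ?_) hz
  rw [dist_comm, Real.dist_eq]
  exact (abs_entry_le (X - Xseq n) i j).trans (hb n)
end

section
/- Let X, Z ∈ ℝ^{N₁×N₂} and let r, s be integers with 1 ≤ r ≤ s and s + 2r ≤ min{N₁, N₂}. If rank(X) ≤ r and H is a best rank-s approximation of Z, then ‖X − H‖_F ≤ (1 + √(8r/(s+r)))·‖X − Z‖_F. -/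
open InnerProductSpace Module

lemma span_one {E : Type*} [AddCommGroup E] [Module ℝ E] (v : E) :
    finrank ℝ (Submodule.span ℝ {v}) ≤ 1 := by
  simpa using finrank_span_le_card (R := ℝ) ({v} : Set E)

lemma exists_super {E : Type*} [AddCommGroup E] [Module ℝ E] [FiniteDimensional ℝ E]
    (V : Submodule ℝ E) (s : ℕ) (h1 : finrank ℝ V ≤ s) (h2 : s ≤ finrank ℝ E) :
    ∃ V' : Submodule ℝ E, V ≤ V' ∧ finrank ℝ V' = s := by
  induction s, h1 using Nat.le_induction with
  | base => exact ⟨V, le_rfl, rfl⟩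
  | succ n hn ih =>
    obtain ⟨V', hV, hf⟩ := ih (by omega)
    have hne : V' ≠ ⊤ := by
      rintro rfl
      rw [finrank_top] at hf
      omega
    obtain ⟨v, hv⟩ : ∃ v, v ∉ V' := by
      by_contra! hc
      exact hne (Submodule.eq_top_iff'.2 hc)
    refine ⟨V' ⊔ Submodule.span ℝ {v}, hV.trans le_sup_left, ?_⟩
    have hlt : V' < V' ⊔ Submodule.span ℝ {v} := by
      refine lt_of_le_of_ne le_sup_left fun he => hv ?_
      rw [he]
      exact Submodule.mem_sup_right (Submodule.mem_span_singleton_self v)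
    have a := Submodule.finrank_lt_finrank_of_lt hlt
    have b := Submodule.finrank_add_le_finrank_add_finrank V' (Submodule.span ℝ {v})
    have c := span_one v
    omega

lemma final_arith_s3 (a b g : ℝ) (hb : 0 ≤ b) (hg : 0 ≤ g) (h : a ^ 2 ≤ b ^ 2 + 2 * (a * g)) :
    a ≤ b + 2 * g := by
  by_contra! hc
  nlinarith [mul_pos (show 0 < a - 2 * g - b by linarith) (show 0 < a by linarith)]

section abstractPart
variable {E : Type*} [NormedAddCommGroup E] [InnerProductSpace ℝ E] [FiniteDimensional ℝ E]
  {ι : Type*} [Fintype ι]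

/-- swapping a direction of the optimal subspace cannot help -/
lemma swap_le (z h : ι → E) (s : ℕ) (V : Submodule ℝ E) (hV : finrank ℝ V = s)
    (hz : ∀ i, h i ∈ V) (hort : ∀ i, z i - h i ∈ Vᗮ)
    (hbest : ∀ w : ι → E, finrank ℝ (Submodule.span ℝ (Set.range w)) ≤ s →
      ∑ i, ‖z i - h i‖ ^ 2 ≤ ∑ i, ‖z i - w i‖ ^ 2)
    (w v : E) (hw : w ∈ V) (hw1 : ‖w‖ = 1) (hv : v ∈ Vᗮ) (hv1 : ‖v‖ = 1) :
    ∑ i, (inner ℝ v (z i)) ^ 2 ≤ ∑ i, (inner ℝ w (z i)) ^ 2 := by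
  have hww : inner ℝ w w = 1 := by rw [real_inner_self_eq_norm_sq, hw1]; norm_num
  have hvv : inner ℝ v v = 1 := by rw [real_inner_self_eq_norm_sq, hv1]; norm_num
  have hwv : inner ℝ w v = 0 := (Submodule.mem_orthogonal V v).1 hv w hw
  have hwy : ∀ i, inner ℝ w (z i - h i) = 0 := fun i =>
    (Submodule.mem_orthogonal V _).1 (hort i) w hw
  have hvh : ∀ i, inner ℝ v (h i) = 0 := fun i =>
    (Submodule.mem_orthogonal' V v).1 hv (h i) (hz i)
  set u : ι → E := fun i => h i - (inner ℝ w (z i)) • w + (inner ℝ v (z i)) • v with hu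
  have hrank : finrank ℝ (Submodule.span ℝ (Set.range u)) ≤ s := by
    set T := V ⊓ (Submodule.span ℝ {w})ᗮ with hT
    have hle : Submodule.span ℝ (Set.range u) ≤ T ⊔ Submodule.span ℝ {v} := by
      rw [Submodule.span_le]
      rintro _ ⟨i, rfl⟩
      refine Submodule.add_mem_sup ⟨?_, ?_⟩ ?_
      · exact V.sub_mem (hz i) (V.smul_mem _ hw)
      · rw [SetLike.mem_coe, Submodule.mem_orthogonal_singleton_iff_inner_right]
        have := hwy i
        rw [inner_sub_right] at this
        rw [inner_sub_right, inner_smul_right, hww]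
        linarith
      · exact Submodule.smul_mem _ _ (Submodule.mem_span_singleton_self v)
    have hlt : T < V := by
      refine lt_of_le_of_ne inf_le_left fun he => ?_
      have hwT : w ∈ T := he ▸ hw
      have := (Submodule.mem_orthogonal_singleton_iff_inner_right).1 hwT.2
      rw [hww] at this
      norm_num at this
    have a := Submodule.finrank_lt_finrank_of_lt hlt
    have b := Submodule.finrank_add_le_finrank_add_finrank T (Submodule.span ℝ {v})
    have c := span_one v
    have d := Submodule.finrank_mono hle
    omega
  have key := hbest u hrank
  have e : ∀ i, ‖z i - u i‖ ^ 2
      = ‖z i - h i‖ ^ 2 + (inner ℝ w (z i)) ^ 2 - (inner ℝ v (z i)) ^ 2 := by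
    intro i
    have hd : z i - u i
        = (z i - h i) + ((inner ℝ w (z i)) • w - (inner ℝ v (z i)) • v) := by
      simp only [hu]; abel
    have h1 : inner ℝ (z i - h i) w = 0 := by rw [real_inner_comm]; exact hwy i
    have h2 : inner ℝ (z i - h i) v = inner ℝ v (z i) := by
      rw [real_inner_comm, inner_sub_right, hvh i, sub_zero]
    rw [hd, norm_add_sq_real, norm_sub_sq_real (_ • w), norm_smul, norm_smul, hw1, hv1, inner_sub_right,
      inner_smul_right, inner_smul_right, h1, h2, inner_smul_left, inner_smul_right, hwv]
    simp only [Real.norm_eq_abs, mul_one, sq_abs]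
    simp
    ring
  simp only [e, Finset.sum_sub_distrib, Finset.sum_add_distrib] at key
  linarith

lemma abstract_bound (x z h : ι → E) (r s : ℕ) (hr : 1 ≤ r) (hrs : r ≤ s)
    (hdim : s ≤ finrank ℝ E)
    (hx : finrank ℝ (Submodule.span ℝ (Set.range x)) ≤ r)
    (hh : finrank ℝ (Submodule.span ℝ (Set.range h)) ≤ s)
    (hbest : ∀ w : ι → E, finrank ℝ (Submodule.span ℝ (Set.range w)) ≤ s →
      ∑ i, ‖z i - h i‖ ^ 2 ≤ ∑ i, ‖z i - w i‖ ^ 2) :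
    √(∑ i, ‖x i - h i‖ ^ 2) ≤
      (1 + √(8 * (r : ℝ) / ((s : ℝ) + (r : ℝ)))) * √(∑ i, ‖x i - z i‖ ^ 2) := by
  have hr0 : (1 : ℝ) ≤ r := by exact_mod_cast hr
  have hrs0 : (r : ℝ) ≤ s := by exact_mod_cast hrs
  set A := ∑ i, ‖x i - h i‖ ^ 2 with hA
  set B := ∑ i, ‖x i - z i‖ ^ 2 with hB
  have hA0 : 0 ≤ A := Finset.sum_nonneg fun _ _ => sq_nonneg _
  have hB0 : 0 ≤ B := Finset.sum_nonneg fun _ _ => sq_nonneg _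
  rcases lt_or_ge (s : ℝ) (3 * r) with hs | hs
  · -- trivial range
    have h1 : (1 : ℝ) ≤ √(8 * (r : ℝ) / ((s : ℝ) + (r : ℝ))) := by
      rw [Real.one_le_sqrt, le_div_iff₀ (by linarith)]
      linarith
    have h2 : A ≤ 4 * B := by
      have h3 := hbest x (hx.trans hrs)
      have h4 : A ≤ ∑ i, (2 * ‖x i - z i‖ ^ 2 + 2 * ‖z i - h i‖ ^ 2) := by
        refine Finset.sum_le_sum fun i _ => ?_
        have := norm_add_le (x i - z i) (z i - h i)
        rw [sub_add_sub_cancel] at this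
        nlinarith [norm_nonneg (x i - h i), sq_nonneg (‖x i - z i‖ - ‖z i - h i‖)]
      rw [Finset.sum_add_distrib, ← Finset.mul_sum, ← Finset.mul_sum] at h4
      simp only [norm_sub_rev (z _) (x _)] at h3
      linarith
    have h5 : √A ≤ 2 * √B := by
      rw [Real.sqrt_le_left (by positivity), mul_pow, Real.sq_sqrt hB0]
      linarith
    nlinarith [Real.sqrt_nonneg B]
  · obtain ⟨V, hhV, hVs⟩ := exists_super _ s hh hdim
    have hhm : ∀ i, h i ∈ V := fun i => hhV (Submodule.subset_span ⟨i, rfl⟩)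
    -- h is the projection of z
    have hproj : ∀ i, h i = V.starProjection (z i) := by
      have h1 := hbest (fun i => V.starProjection (z i)) (by
        rw [← hVs]
        refine Submodule.finrank_mono ?_
        rw [Submodule.span_le]
        rintro _ ⟨i, rfl⟩
        exact V.starProjection_apply_mem _)
      have h2 : ∀ i, ‖z i - h i‖ ^ 2
          = ‖z i - V.starProjection (z i)‖ ^ 2 + ‖V.starProjection (z i) - h i‖ ^ 2 := by
        intro i
        have h3 := V.starProjection_inner_eq_zero (z i) (V.starProjection (z i) - h i)
          (V.sub_mem (V.starProjection_apply_mem _) (hhm i))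
        have h4 := norm_add_sq_real (z i - V.starProjection (z i)) (V.starProjection (z i) - h i)
        rw [sub_add_sub_cancel, h3] at h4
        linarith
      simp only [h2, Finset.sum_add_distrib] at h1
      have h5 : ∑ i, ‖V.starProjection (z i) - h i‖ ^ 2 = 0 :=
        le_antisymm (by linarith) (Finset.sum_nonneg fun _ _ => sq_nonneg _)
      rw [Finset.sum_eq_zero_iff_of_nonneg (fun _ _ => sq_nonneg _)] at h5
      intro i
      have := h5 i (Finset.mem_univ i)
      rw [sq_eq_zero_iff, norm_eq_zero, sub_eq_zero] at this
      exact this.symm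
    have hort : ∀ i, z i - h i ∈ Vᗮ := fun i => by
      rw [hproj i]; exact V.sub_starProjection_mem_orthogonal _
    have hswap := swap_le z h s V hVs hhm hort hbest
    set S := Submodule.span ℝ (Set.range x) with hS
    have hxS : ∀ i, x i ∈ S := fun i => Submodule.subset_span ⟨i, rfl⟩
    set W : Submodule ℝ E := V ⊓ Sᗮ with hW
    set K : Submodule ℝ E := S.map (Vᗮ.starProjection : E →ₗ[ℝ] E) with hK
    have hKr : finrank ℝ K ≤ r := (Submodule.finrank_map_le _ _).trans hx
    have hKV : K ≤ Vᗮ := by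
      rintro _ ⟨y, -, rfl⟩
      exact Vᗮ.starProjection_apply_mem _
    have hWs : s - r ≤ finrank ℝ W := by
      have a := Submodule.finrank_sup_add_finrank_inf_eq V Sᗮ
      have b := S.finrank_add_finrank_orthogonal
      have c := Submodule.finrank_le (V ⊔ Sᗮ)
      rw [← hW] at a
      omega
    let bW := stdOrthonormalBasis ℝ W
    let bK := stdOrthonormalBasis ℝ K
    set q : E → ℝ := fun v => ∑ i, (inner ℝ v (z i)) ^ 2 with hq
    have hbWn : ∀ j, ‖((bW j : W) : E)‖ = 1 := fun j => bW.orthonormal.1 j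
    have hbKn : ∀ j, ‖((bK j : K) : E)‖ = 1 := fun j => bK.orthonormal.1 j
    set G := ∑ j, q (bK j) with hG
    have hq0 : ∀ v, 0 ≤ q v := fun v => Finset.sum_nonneg fun _ _ => sq_nonneg _
    have hG0 : 0 ≤ G := Finset.sum_nonneg fun _ _ => hq0 _
    -- lower bound for B
    have hBW : ∑ j, q (bW j) ≤ B := by
      simp only [hq]
      rw [Finset.sum_comm]
      refine Finset.sum_le_sum fun i _ => ?_
      have hon : Orthonormal ℝ (fun j => ((bW j : W) : E)) :=
        bW.orthonormal.comp_linearIsometry W.subtypeₗᵢ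
      have := hon.sum_inner_products_le (s := Finset.univ) (x i - z i)
      refine le_trans (le_of_eq (Finset.sum_congr rfl fun j _ => ?_)) this
      have h0 : inner ℝ ((bW j : W) : E) (x i) = 0 :=
        (Submodule.mem_orthogonal' S _).1 (bW j).2.2 _ (hxS i)
      rw [inner_sub_right, h0, Real.norm_eq_abs, sq_abs]
      ring
    have hGB : ((s : ℝ) - r) * G ≤ r * B := by
      have h1 : ∑ j, ∑ l, q (bK j) ≤ ∑ j : Fin (finrank ℝ K), ∑ l, q (bW l) :=
        Finset.sum_le_sum fun j _ => Finset.sum_le_sum fun l _ =>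
          hswap _ _ (bW l).2.1 (hbWn l) (hKV (bK j).2) (hbKn j)
      simp only [Finset.sum_const, Finset.card_univ, Fintype.card_fin, nsmul_eq_mul] at h1
      rw [← Finset.mul_sum] at h1
      have h2 : ((s : ℝ) - r) ≤ finrank ℝ W := by
        have : (s : ℝ) ≤ finrank ℝ W + r := by exact_mod_cast (by omega)
        linarith
      have h3 : (finrank ℝ K : ℝ) ≤ r := by exact_mod_cast hKr
      calc ((s : ℝ) - r) * G ≤ finrank ℝ W * G := mul_le_mul_of_nonneg_right h2 hG0
        _ ≤ finrank ℝ K * ∑ l, q (bW l) := h1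
        _ ≤ r * B := mul_le_mul h3 hBW (Finset.sum_nonneg fun _ _ => hq0 _) (by linarith)
    -- the inner product
    have hin : ∑ i, inner ℝ (x i) (z i - h i) ≤ √A * √G := by
      have h1 : ∀ i, inner ℝ (x i) (z i - h i) ≤ ‖x i - h i‖ * ‖K.starProjection (z i)‖ := by
        intro i
        have e1 : inner ℝ (x i) (z i - h i) = inner ℝ (Vᗮ.starProjection (x i - h i))
            (K.starProjection (z i)) := by
          have k1 : Vᗮ.starProjection (h i) = 0 := by
            rw [Submodule.starProjection_apply_eq_zero_iff]
            exact Submodule.le_orthogonal_orthogonal V (hhm i)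
          have k2 : Vᗮ.starProjection (z i) = z i - h i := by
            rw [Submodule.starProjection_orthogonal_val, hproj i]
          have k3 : Vᗮ.starProjection (x i) ∈ K := ⟨x i, hxS i, rfl⟩
          have k4 : K.starProjection (Vᗮ.starProjection (x i)) = Vᗮ.starProjection (x i) :=
            Submodule.starProjection_eq_self_iff.2 k3
          rw [map_sub, k1, sub_zero, ← Submodule.inner_starProjection_left_eq_right, k4,
            Submodule.inner_starProjection_left_eq_right, k2]
        rw [e1]
        refine (real_inner_le_norm _ _).trans ?_
        exact mul_le_mul_of_nonneg_right (Submodule.norm_starProjection_apply_le _ _)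
          (norm_nonneg _)
      have h2 : ∑ i, ‖K.starProjection (z i)‖ ^ 2 = G := by
        simp only [hG, hq]
        rw [Finset.sum_comm]
        refine Finset.sum_congr rfl fun i _ => ?_
        have := bK.sum_sq_norm_inner_right (K.orthogonalProjectionOnto (z i))
        rw [Submodule.starProjection_apply, ← Submodule.coe_norm, ← this]
        refine Finset.sum_congr rfl fun j _ => ?_
        rw [Submodule.inner_orthogonalProjectionOnto_eq_of_mem_left, Real.norm_eq_abs, sq_abs]
      calc _ ≤ ∑ i, ‖x i - h i‖ * ‖K.starProjection (z i)‖ := Finset.sum_le_sum fun i _ => h1 i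
        _ ≤ _ := Real.sum_mul_le_sqrt_mul_sqrt _ _ _
        _ = √A * √G := by rw [h2]
    have hmain : A ≤ B + 2 * (√A * √G) := by
      have h1 : ∀ i, ‖x i - h i‖ ^ 2
          ≤ ‖x i - z i‖ ^ 2 + 2 * inner ℝ (x i) (z i - h i) := by
        intro i
        have h2 : inner ℝ (h i) (z i - h i) = 0 :=
          (Submodule.mem_orthogonal V _).1 (hort i) _ (hhm i)
        have h3 := norm_sub_sq_real (x i - h i) (z i - h i)
        rw [sub_sub_sub_cancel_right, inner_sub_left, h2] at h3
        nlinarith [sq_nonneg ‖z i - h i‖]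
      have h2 : A ≤ ∑ i, (‖x i - z i‖ ^ 2 + 2 * inner ℝ (x i) (z i - h i)) :=
        Finset.sum_le_sum fun i _ => h1 i
      rw [Finset.sum_add_distrib, ← Finset.mul_sum] at h2
      linarith
    have h1 := final_arith_s3 (√A) (√B) (√G) (Real.sqrt_nonneg _) (Real.sqrt_nonneg _)
      (by rw [Real.sq_sqrt hA0, Real.sq_sqrt hB0]; exact hmain)
    have h2 : 2 * √G ≤ √(8 * (r : ℝ) / ((s : ℝ) + (r : ℝ))) * √B := by
      rw [← Real.sqrt_mul (by positivity)]
      refine Real.le_sqrt_of_sq_le ?_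
      rw [mul_pow, Real.sq_sqrt hG0, div_mul_eq_mul_div, le_div_iff₀ (by linarith)]
      nlinarith [mul_nonneg hG0 (show (0:ℝ) ≤ s - 3 * r by linarith)]
    linarith

end abstractPart

lemma rank_rows {N₁ N₂ : ℕ} (M : Matrix (Fin N₁) (Fin N₂) ℝ) :
    finrank ℝ (Submodule.span ℝ (Set.range
      (fun i => (WithLp.toLp 2 (M i) : EuclideanSpace ℝ (Fin N₂))))) = M.rank := by
  rw [Matrix.rank_eq_finrank_span_row,
    ← LinearEquiv.finrank_map_eq (WithLp.linearEquiv 2 ℝ (Fin N₂ → ℝ)).symm,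
    Submodule.map_span, ← Set.range_comp]
  rfl

lemma frob_rows {N₁ N₂ : ℕ} (A B : Matrix (Fin N₁) (Fin N₂) ℝ) :
    frobNorm (A - B) = √(∑ i, ‖(WithLp.toLp 2 (A i) : EuclideanSpace ℝ (Fin N₂))
      - WithLp.toLp 2 (B i)‖ ^ 2) := by
  simp [frobNorm, EuclideanSpace.norm_sq_eq]

/-- Proposition 1 (ShenLi-type bound): if rank(X) ≤ r and H is a best rank-s approximation
of Z, with 1 ≤ r ≤ s and s + 2r ≤ min{N₁, N₂}, then
‖X − H‖_F ≤ (1 + √(8r/(s+r)))·‖X − Z‖_F. -/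
theorem stmt3 {N₁ N₂ : ℕ} (X Z H : Matrix (Fin N₁) (Fin N₂) ℝ) (r s : ℕ)
    (hr : 1 ≤ r) (hrs : r ≤ s) (hdim : s + 2 * r ≤ min N₁ N₂)
    (hX : X.rank ≤ r) (hH : IsBestRankApprox s Z H) :
    frobNorm (X - H) ≤ (1 + Real.sqrt (8 * (r : ℝ) / ((s : ℝ) + (r : ℝ)))) * frobNorm (X - Z) := by
  rw [frob_rows, frob_rows]
  refine abstract_bound _ _ _ r s hr hrs ?_ ?_ ?_ ?_
  · rw [finrank_euclideanSpace_fin]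
    have := min_le_right N₁ N₂
    omega
  · rw [rank_rows]; exact hX
  · rw [rank_rows]; exact hH.1
  · intro w hw
    have h1 := hH.2 (Matrix.of fun i j => w i j) (by rw [← rank_rows]; exact hw)
    rw [frob_rows, frob_rows] at h1
    exact (Real.sqrt_le_sqrt_iff (Finset.sum_nonneg fun _ _ => sq_nonneg _)).1 h1
end

section
/- Let X ∈ ℝ^{N₁×N₂}, let r, s be integers with 1 ≤ r ≤ s and s + r ≤ min{N₁, N₂}, and let e ∈ ℝ^m. Suppose rank(X) ≤ r and the linear map 𝓐 : ℝ^{N₁×N₂} → ℝ^m satisfies the modified rank-restricted isometry property of order s + r with constants 0 < α ≤ β; set γ := β/α. Let H be a best rank-s approximation of 𝓐*(sgn(𝓐(X) + e)). Suppose τ ≥ 1 and ν > 0 satisfy β²/τ ≤ ν ≤ β² and ν ≥ ‖H‖_F², and set μ := ‖𝓐(X) + e‖₁ / ν. Then ‖X − μ·H‖_F ≤ (1 − 1/(2γ²) + τ·√(r/(s+r)))·‖X‖_F + (6τ²/β)·‖e‖₁. -/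
namespace S4
open Module
variable {N₁ N₂ : ℕ}

def proj (I : Finset (Fin N₁)) (M : Matrix (Fin N₁) (Fin N₂) ℝ) : Matrix (Fin N₁) (Fin N₂) ℝ :=
  fun i j => if i ∈ I then M i j else 0

lemma rank_proj (I : Finset (Fin N₁)) (M : Matrix (Fin N₁) (Fin N₂) ℝ) :
    (proj I M).rank ≤ I.card := by
  have h : proj I M = Matrix.diagonal (fun i => if i ∈ I then (1:ℝ) else 0) * M := by
    ext i j
    simp [proj, Matrix.diagonal_mul]
  rw [h]
  refine (Matrix.rank_mul_le_left _ _).trans ?_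
  rw [Matrix.rank_diagonal]
  simp

lemma frobNorm_sq (Z : Matrix (Fin N₁) (Fin N₂) ℝ) : frobNorm Z ^ 2 = ∑ i, ∑ j, (Z i j) ^ 2 :=
  Real.sq_sqrt (Finset.sum_nonneg fun _ _ => Finset.sum_nonneg fun _ _ => sq_nonneg _)

lemma frobNorm_nonneg (Z : Matrix (Fin N₁) (Fin N₂) ℝ) : 0 ≤ frobNorm Z := Real.sqrt_nonneg _

lemma frobInner_self (Z : Matrix (Fin N₁) (Fin N₂) ℝ) : frobInner Z Z = frobNorm Z ^ 2 := by
  rw [frobNorm_sq]; simp [frobInner, sq]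

lemma cauchy (A B : Matrix (Fin N₁) (Fin N₂) ℝ) : frobInner A B ≤ frobNorm A * frobNorm B := by
  have := Real.sum_mul_le_sqrt_mul_sqrt (Finset.univ : Finset (Fin N₁ × Fin N₂))
    (fun p => A p.1 p.2) (fun p => B p.1 p.2)
  simpa [frobInner, frobNorm, Fintype.sum_prod_type] using this

/-- sum of the squared row norms over `I` -/
def rs (M : Matrix (Fin N₁) (Fin N₂) ℝ) (i : Fin N₁) : ℝ := ∑ j, M i j ^ 2

lemma rs_nonneg (M : Matrix (Fin N₁) (Fin N₂) ℝ) (i) : 0 ≤ rs M i :=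
  Finset.sum_nonneg fun _ _ => sq_nonneg _

lemma sq_proj (I : Finset (Fin N₁)) (M : Matrix (Fin N₁) (Fin N₂) ℝ) :
    frobNorm (proj I M) ^ 2 = ∑ i ∈ I, rs M i := by
  rw [frobNorm_sq, ← Finset.sum_filter_add_sum_filter_not Finset.univ (· ∈ I)]
  have h1 : ∑ i with i ∉ I, ∑ j, proj I M i j ^ 2 = 0 := by
    apply Finset.sum_eq_zero
    intro i hi
    simp at hi
    simp [proj, hi]
  rw [h1, add_zero, Finset.filter_mem_eq_inter, Finset.univ_inter]
  apply Finset.sum_congr rfl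
  intro i hi
  simp [proj, hi, rs]

lemma sq_sub_proj (I : Finset (Fin N₁)) (M : Matrix (Fin N₁) (Fin N₂) ℝ) :
    frobNorm (M - proj I M) ^ 2 = ∑ i, rs M i - ∑ i ∈ I, rs M i := by
  have : M - proj I M = proj Iᶜ M := by
    ext i j
    by_cases hi : i ∈ I <;> simp [proj, hi]
  rw [this, sq_proj, ← Finset.sum_add_sum_compl I]; ring

lemma inner_proj (I : Finset (Fin N₁)) (M : Matrix (Fin N₁) (Fin N₂) ℝ) :
    frobInner M (proj I M) = ∑ i ∈ I, rs M i := by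
  rw [← sq_proj, ← frobInner_self]
  unfold frobInner
  refine Finset.sum_congr rfl fun i _ => Finset.sum_congr rfl fun j _ => ?_
  by_cases hi : i ∈ I <;> simp [proj, hi]

lemma core (M H X : Matrix (Fin N₁) (Fin N₂) ℝ) (r s : ℕ) (hs : 1 ≤ s) (β : ℝ) (hβ : 0 ≤ β)
    (hH : IsBestRankApprox s M H) (hM : ∀ Z : Matrix (Fin N₁) (Fin N₂) ℝ, Z.rank ≤ s + r →
      frobInner M Z ≤ β * frobNorm Z) (I J : Finset (Fin N₁)) (hIJ : I ⊆ J) (hI : I.card = s)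
    (hJ : J.card = s + r) (hHI : ∀ i ∉ I, ∀ j, H i j = 0) (hXJ : ∀ i ∉ J, ∀ j, X i j = 0) :
    frobInner X (M - H) ≤ β * Real.sqrt ((r : ℝ) / ((s : ℝ) + (r : ℝ))) * frobNorm X := by
  have hsq : ∀ W : Matrix (Fin N₁) (Fin N₂) ℝ, W.rank ≤ s →
      frobNorm (M - H) ^ 2 ≤ frobNorm (M - W) ^ 2 := fun W hW =>
    pow_le_pow_left₀ (frobNorm_nonneg _) (hH.2 W hW) 2
  have hHM : H = proj I M := by
    have h1 := hsq (proj I M) ((rank_proj I M).trans hI.le)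
    have h2 : frobNorm (M - H) ^ 2 = frobNorm (M - proj I M) ^ 2 + frobNorm (proj I M - H) ^ 2 := by
      simp only [frobNorm_sq, ← Finset.sum_add_distrib]
      refine Finset.sum_congr rfl fun i _ => Finset.sum_congr rfl fun j _ => ?_
      by_cases hi : i ∈ I
      · simp [proj, hi]
      · simp [proj, hi, hHI i hi j]
    have h3 : frobNorm (proj I M - H) ^ 2 = 0 := le_antisymm (by linarith) (sq_nonneg _)
    rw [frobNorm_sq] at h3
    have h3' := (Finset.sum_eq_zero_iff_of_nonneg
      (fun i _ => Finset.sum_nonneg fun j _ => sq_nonneg ((proj I M - H) i j))).1 h3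
    ext i j
    have h4 := h3' i (Finset.mem_univ _)
    have h5 := (Finset.sum_eq_zero_iff_of_nonneg
      (fun j _ => sq_nonneg ((proj I M - H) i j))).1 h4 j (Finset.mem_univ _)
    have h6 := pow_eq_zero_iff (two_ne_zero) |>.1 h5
    simp only [Matrix.sub_apply] at h6
    linarith
  have hswap : ∀ i ∈ I, ∀ k ∉ I, rs M k ≤ rs M i := by
    intro i hi k hk
    have hk' : k ∉ I.erase i := fun h => hk (Finset.mem_of_mem_erase h)
    have h1 := hsq (proj (insert k (I.erase i)) M) ((rank_proj _ M).trans (by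
      rw [Finset.card_insert_of_notMem hk', Finset.card_erase_of_mem hi]; omega))
    rw [hHM, sq_sub_proj, sq_sub_proj, Finset.sum_insert hk', ← Finset.add_sum_erase I _ hi] at h1
    linarith
  set a := ∑ i ∈ I, rs M i with ha
  set c := ∑ k ∈ J \ I, rs M k with hc
  have hcard : (J \ I).card = r := by rw [Finset.card_sdiff_of_subset hIJ]; omega
  have h1 : (s : ℝ) * c ≤ r * a := by
    have : ∑ i ∈ I, ∑ k ∈ J \ I, rs M k ≤ ∑ i ∈ I, ∑ k ∈ J \ I, rs M i :=
      Finset.sum_le_sum fun i hi => Finset.sum_le_sum fun k hk =>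
        hswap i hi k (Finset.mem_sdiff.1 hk).2
    simpa [hI, hcard, ← Finset.mul_sum] using this
  have hac : a + c = frobNorm (proj J M) ^ 2 := by
    rw [sq_proj, ha, hc, add_comm, Finset.sum_sdiff hIJ]
  have h2 : a + c ≤ β ^ 2 := by
    have h := hM (proj J M) ((rank_proj J M).trans hJ.le)
    rw [inner_proj, ← sq_proj] at h
    rw [hac]
    have := frobNorm_nonneg (proj J M)
    by_cases h0 : frobNorm (proj J M) = 0
    · rw [h0]; nlinarith
    · have : 0 < frobNorm (proj J M) := lt_of_le_of_ne this (Ne.symm h0)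
      have : frobNorm (proj J M) ≤ β := by nlinarith
      nlinarith
  have hs' : (0:ℝ) < s := by exact_mod_cast hs
  have h3 : c ≤ β ^ 2 * ((r : ℝ) / (s + r)) := by
    rw [← mul_div_assoc, le_div_iff₀ (by positivity)]
    have hr0 : (0:ℝ) ≤ r := by positivity
    nlinarith
  have h4 : frobInner X (M - H) = frobInner X (proj (J \ I) M) := by
    unfold frobInner
    refine Finset.sum_congr rfl fun i _ => Finset.sum_congr rfl fun j _ => ?_
    rw [hHM]
    by_cases hi : i ∈ I
    · simp [proj, hi]
    · by_cases hj : i ∈ J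
      · simp [proj, hi, hj]
      · simp [hXJ i hj j]
  have h5 : frobNorm (proj (J \ I) M) ≤ β * Real.sqrt ((r : ℝ) / ((s : ℝ) + (r : ℝ))) := by
    apply le_of_sq_le_sq _ (by positivity)
    rw [sq_proj, mul_pow, Real.sq_sqrt (by positivity)]
    exact h3
  rw [h4]
  refine (cauchy _ _).trans ?_
  rw [mul_comm]
  exact mul_le_mul_of_nonneg_right h5 (frobNorm_nonneg _)

set_option maxHeartbeats 2000000 in
lemma final (x ε b α β τ ν ρ F : ℝ) (hx : 0 ≤ x) (hε : 0 ≤ ε) (hα : 0 < α) (hαβ : α ≤ β)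
    (hτ : 1 ≤ τ) (hν1 : β ^ 2 / τ ≤ ν) (hν2 : ν ≤ β ^ 2) (hρ : 0 ≤ ρ) (hρ1 : ρ ≤ 1)
    (hb0 : 0 ≤ b) (hb1 : α * x - ε ≤ b) (hb2 : b ≤ β * x + ε)
    (hF : F ^ 2 ≤ x ^ 2 - (b / ν) * b + 2 * (b / ν) * ε + 2 * (b / ν) * (β * ρ * x)) :
    F ≤ (1 - 1 / (2 * (β / α) ^ 2) + τ * ρ) * x + (6 * τ ^ 2 / β) * ε := by
  have hβ : 0 < β := hα.trans_le hαβ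
  have hν : 0 < ν := lt_of_lt_of_le (by positivity) hν1
  obtain ⟨δ, rfl⟩ : ∃ δ, ε = β * δ := ⟨ε / β, by field_simp⟩
  have hδ : 0 ≤ δ := by by_contra h; push Not at h; nlinarith
  obtain ⟨κ, rfl⟩ : ∃ κ, α = β * κ := ⟨α / β, by field_simp⟩
  have hκ : 0 < κ := by by_contra h; push Not at h; nlinarith
  have hκ1 : κ ≤ 1 := by by_contra h; push Not at h; nlinarith
  obtain ⟨d, rfl⟩ : ∃ d, b = β * d := ⟨b / β, by field_simp⟩
  have hd : 0 ≤ d := by by_contra h; push Not at h; nlinarith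
  have hd1 : κ * x - δ ≤ d := by by_contra h; push Not at h; nlinarith
  have hd2 : d ≤ x + δ := by by_contra h; push Not at h; nlinarith
  have hm1 : β * d / ν * β ≤ τ * d := by
    rw [div_le_iff₀ (by positivity)] at hν1
    rw [div_mul_eq_mul_div, div_le_iff₀ hν]
    nlinarith
  have hm2 : d ^ 2 ≤ β * d / ν * (β * d) := by
    rw [div_mul_eq_mul_div, le_div_iff₀ hν]
    nlinarith [sq_nonneg d]
  have hdsq : κ ^ 2 * x ^ 2 - 2 * x * δ ≤ d ^ 2 := by
    have hxd : 0 ≤ x * δ := by positivity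
    have hkx : 0 ≤ κ * x := by positivity
    have hkx1 : κ * x ≤ x := by nlinarith
    rcases le_total (κ * x) δ with h | h
    · nlinarith [sq_nonneg d]
    · nlinarith
  have e1 : 1 / (2 * (β / (β * κ)) ^ 2) = κ ^ 2 / 2 := by field_simp
  have e2 : 6 * τ ^ 2 / β * (β * δ) = 6 * τ ^ 2 * δ := by field_simp
  rw [e1, e2]
  have hK : 1 / 2 + τ * ρ ≤ 1 - κ ^ 2 / 2 + τ * ρ := by nlinarith
  have hτρ : 0 ≤ τ * ρ := by positivity
  have hF2 : F ^ 2 ≤ x ^ 2 - (κ ^ 2 * x ^ 2 - 2 * x * δ) + 2 * (τ * (x + δ)) * δ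
      + 2 * (τ * (x + δ)) * (ρ * x) := by
    have h1 : β * d / ν * β ≤ τ * (x + δ) := hm1.trans (by nlinarith)
    have h2 := mul_le_mul_of_nonneg_right h1 hδ
    have h3 := mul_le_mul_of_nonneg_right h1 (mul_nonneg hρ hx)
    nlinarith
  set K := 1 - κ ^ 2 / 2 + τ * ρ with hKd
  clear_value K
  clear hF hm1 hm2 hdsq hd1 hd2 hb1 hb2 hν1 hν2 e1 e2 hb0 hε hα hαβ
  have hK0 : 0 ≤ K := by linarith
  apply le_of_sq_le_sq _ (by positivity)
  have t2 : τ ≤ τ ^ 2 := by nlinarith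
  have t4 : τ ≤ τ ^ 4 := le_self_pow₀ hτ (by norm_num)
  have k1 : 1 - κ ^ 2 + 2 * (τ * ρ) ≤ K ^ 2 := by
    have : K ^ 2 = 1 - κ ^ 2 + 2 * (τ * ρ) + (τ * ρ - κ ^ 2 / 2) ^ 2 := by rw [hKd]; ring
    nlinarith [sq_nonneg (τ * ρ - κ ^ 2 / 2)]
  have k2 : 2 + 2 * τ + 2 * (τ * ρ) ≤ 12 * τ ^ 2 * K := by
    have : τ * ρ ≤ τ := by nlinarith
    have : 1 / 2 ≤ K := by linarith
    nlinarith [mul_le_mul_of_nonneg_left this (sq_nonneg τ)]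
  have m1 := mul_le_mul_of_nonneg_right k1 (sq_nonneg x)
  have m2 := mul_le_mul_of_nonneg_right k2 (mul_nonneg hx hδ)
  have m3 : 2 * τ * δ ^ 2 ≤ 36 * τ ^ 4 * δ ^ 2 :=
    mul_le_mul_of_nonneg_right (by nlinarith) (sq_nonneg δ)
  linarith
lemma extend {N : ℕ} (b : OrthonormalBasis (Fin N) ℝ (EuclideanSpace ℝ (Fin N)))
    (I : Finset (Fin N)) (V : Submodule ℝ (EuclideanSpace ℝ (Fin N))) (r : ℕ)
    (hV : finrank ℝ V ≤ r) (hN : I.card + r ≤ N) :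
    ∃ (b' : OrthonormalBasis (Fin N) ℝ (EuclideanSpace ℝ (Fin N))) (J : Finset (Fin N)),
      I ⊆ J ∧ J.card = I.card + r ∧ (∀ i ∈ I, b' i = b i) ∧
      ∀ i ∉ J, ∀ v ∈ V, inner ℝ (b' i) v = 0 := by
  classical
  set W : Submodule ℝ (EuclideanSpace ℝ (Fin N)) :=
    Submodule.span ℝ (Set.range (fun i : I => b i)) with hW
  have hWr : finrank ℝ W = I.card := by
    rw [hW, finrank_span_eq_card]
    · simp
    · exact (b.orthonormal.comp _ Subtype.val_injective).linearIndependent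
  set T := W ⊔ V with hT
  have hT1 : I.card ≤ finrank ℝ T := hWr ▸ Submodule.finrank_mono le_sup_left
  have hT2 : finrank ℝ T ≤ I.card + r := by
    have := Submodule.finrank_add_le_finrank_add_finrank W V
    rw [hWr] at this
    exact this.trans (Nat.add_le_add_left hV _)
  obtain ⟨J, hIJ, -, hJ⟩ := Finset.exists_subsuperset_card_eq (Finset.subset_univ I) hT1
    (by simp; omega)
  obtain ⟨J', hJJ', -, hJ'⟩ := Finset.exists_subsuperset_card_eq (Finset.subset_univ J)
    (hJ.le.trans hT2) (by simp; omega)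
  have hmem : ∀ i ∈ I, b i ∈ T := fun i hi =>
    le_sup_left (a := W) (Submodule.subset_span ⟨⟨i, hi⟩, rfl⟩)
  let v : J → T := fun i => if h : (i : Fin N) ∈ I then ⟨b i, hmem i h⟩ else 0
  have hv : Orthonormal ℝ (({i : J | (i : Fin N) ∈ I} : Set J).domRestrict v) := by
    rw [← T.subtypeₗᵢ.orthonormal_comp_iff]
    have : (T.subtypeₗᵢ ∘ ({i : J | (i : Fin N) ∈ I} : Set J).domRestrict v)
        = b ∘ (fun i : ({i : J | (i : Fin N) ∈ I} : Set J) => ((i : J) : Fin N)) := by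
      funext i
      have hi : ((i : J) : Fin N) ∈ I := i.2
      simp [v, hi]
    rw [this]
    exact b.orthonormal.comp _ (Subtype.val_injective.comp Subtype.val_injective)
  obtain ⟨c, hc⟩ := hv.exists_orthonormalBasis_extension_of_card_eq (by simp [hJ])
  let w : Fin N → EuclideanSpace ℝ (Fin N) := fun i => if h : i ∈ J then (c ⟨i, h⟩ : T) else 0
  have hw : Orthonormal ℝ ((J : Set (Fin N)).domRestrict w) := by
    have : ((J : Set (Fin N)).domRestrict w) = T.subtypeₗᵢ ∘ c := by
      funext i
      have hi : (i : Fin N) ∈ J := i.2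
      simp [w, hi]
    rw [this]
    exact c.orthonormal.comp_linearIsometry _
  obtain ⟨b', hb'⟩ := hw.exists_orthonormalBasis_extension_of_card_eq (by simp)
  refine ⟨b', J', hIJ.trans hJJ', hJ', ?_, ?_⟩
  · intro i hi
    rw [hb' i (hIJ hi)]
    have := hc ⟨i, hIJ hi⟩ hi
    simp [w, hIJ hi, this, v, hi]
  · intro i hi x hx
    have hxT : x ∈ T := le_sup_right (a := W) hx
    have hx2 := c.sum_repr ⟨x, hxT⟩
    have hx3 : x = ∑ k, c.repr ⟨x, hxT⟩ k • (c k : EuclideanSpace ℝ (Fin N)) := by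
      have := congrArg Subtype.val hx2
      simpa using this.symm
    rw [hx3, inner_sum]
    refine Finset.sum_eq_zero fun k _ => ?_
    have hk : (c k : EuclideanSpace ℝ (Fin N)) = b' k := by
      rw [hb' k k.2]; simp [w]
    rw [hk, inner_smul_right, b'.inner_eq_ite, if_neg, mul_zero]
    rintro rfl
    exact hi (hJJ' k.2)

/-- the column space -/
def colSp {N₁ N₂ : ℕ} (X : Matrix (Fin N₁) (Fin N₂) ℝ) :
    Submodule ℝ (EuclideanSpace ℝ (Fin N₁)) :=
  (Submodule.span ℝ (Set.range X.col)).map (WithLp.linearEquiv 2 ℝ (Fin N₁ → ℝ)).symm.toLinearMap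

lemma colSp_rank {N₁ N₂ : ℕ} (X : Matrix (Fin N₁) (Fin N₂) ℝ) : finrank ℝ (colSp X) = X.rank := by
  rw [Matrix.rank_eq_finrank_span_cols, colSp]
  exact LinearEquiv.finrank_map_eq _ _

lemma exists_U {N₁ N₂ : ℕ} (H X : Matrix (Fin N₁) (Fin N₂) ℝ) (r s : ℕ) (hH : H.rank ≤ s)
    (hX : X.rank ≤ r) (hN : s + r ≤ N₁) :
    ∃ (U : Matrix (Fin N₁) (Fin N₁) ℝ) (I J : Finset (Fin N₁)), U.transpose * U = 1 ∧ I ⊆ J ∧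
      I.card = s ∧ J.card = s + r ∧ (∀ i ∉ I, ∀ j, (U * H) i j = 0) ∧
      (∀ i ∉ J, ∀ j, (U * X) i j = 0) := by
  obtain ⟨b, I, -, hI, -, hHI⟩ := extend (EuclideanSpace.basisFun (Fin N₁) ℝ) ∅ (colSp H) s
    ((colSp_rank H).trans_le hH) (by simp; omega)
  rw [Finset.card_empty, zero_add] at hI
  obtain ⟨b', J, hIJ, hJ, hbb, hXJ⟩ := extend b I (colSp X) r
    ((colSp_rank X).trans_le hX) (by omega)
  have hmul : ∀ (Y : Matrix (Fin N₁) (Fin N₂) ℝ) i j,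
      ((Matrix.of fun i k => b' i k) * Y) i j = inner ℝ (b' i) (WithLp.toLp 2 (Y.col j)) := by
    intro Y i j
    simp [Matrix.mul_apply, PiLp.inner_apply, mul_comm]
  have hcol : ∀ (Y : Matrix (Fin N₁) (Fin N₂) ℝ) j, WithLp.toLp 2 (Y.col j) ∈ colSp Y :=
    fun Y j => ⟨Y.col j, Submodule.subset_span ⟨j, rfl⟩, rfl⟩
  refine ⟨Matrix.of fun i k => b' i k, I, J, ?_, hIJ, hI, by omega, ?_, ?_⟩
  · rw [mul_eq_one_comm]
    ext i j
    have := b'.inner_eq_ite i j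
    rw [PiLp.inner_apply] at this
    simp only [Matrix.mul_apply, Matrix.one_apply, Matrix.transpose_apply, Matrix.of_apply]
    rw [← this]
    simp [mul_comm]
  · intro i hi j
    rw [hmul]
    -- expand the column in the basis `b`; only indices in `I` occur
    rw [← b.sum_repr' (WithLp.toLp 2 (H.col j)), inner_sum]
    refine Finset.sum_eq_zero fun k _ => ?_
    rw [inner_smul_right]
    by_cases hk : k ∈ I
    · rw [← hbb k hk, b'.inner_eq_ite i k, if_neg, mul_zero]
      rintro rfl
      exact hi hk
    · rw [hHI k hk _ (hcol H j), zero_mul]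
  · intro i hi j
    rw [hmul]
    exact hXJ i hi _ (hcol X j)

lemma inner_U (U : Matrix (Fin N₁) (Fin N₁) ℝ) (hU : U.transpose * U = 1)
    (Y Z : Matrix (Fin N₁) (Fin N₂) ℝ) : frobInner (U * Y) (U * Z) = frobInner Y Z := by
  have h : ∀ P Q : Matrix (Fin N₁) (Fin N₂) ℝ,
      frobInner P Q = (P.transpose * Q).trace := by
    intro P Q
    simp only [frobInner, Matrix.trace, Matrix.diag, Matrix.mul_apply, Matrix.transpose_apply]
    exact Finset.sum_comm
  rw [h, h, Matrix.transpose_mul, Matrix.mul_assoc, ← Matrix.mul_assoc U.transpose, hU,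
    Matrix.one_mul]

lemma norm_U (U : Matrix (Fin N₁) (Fin N₁) ℝ) (hU : U.transpose * U = 1)
    (Y : Matrix (Fin N₁) (Fin N₂) ℝ) : frobNorm (U * Y) = frobNorm Y := by
  have h := inner_U U hU Y Y
  rw [frobInner_self, frobInner_self] at h
  exact (pow_left_inj₀ (frobNorm_nonneg _) (frobNorm_nonneg _) two_ne_zero).1 h

lemma key (M H X : Matrix (Fin N₁) (Fin N₂) ℝ) (r s : ℕ) (hs : 1 ≤ s) (hN : s + r ≤ N₁)
    (β : ℝ) (hβ : 0 ≤ β) (hX : X.rank ≤ r)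
    (hH : IsBestRankApprox s M H) (hM : ∀ Z : Matrix (Fin N₁) (Fin N₂) ℝ, Z.rank ≤ s + r →
      frobInner M Z ≤ β * frobNorm Z) :
    frobInner X (M - H) ≤ β * Real.sqrt ((r : ℝ) / ((s : ℝ) + (r : ℝ))) * frobNorm X := by
  obtain ⟨U, I, J, hU, hIJ, hI, hJ, hHI, hXJ⟩ := exists_U H X r s hH.1 hX hN
  have hU' : U * U.transpose = 1 := mul_eq_one_comm.1 hU
  have hback : ∀ W : Matrix (Fin N₁) (Fin N₂) ℝ, U * (U.transpose * W) = W := fun W => by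
    rw [← Matrix.mul_assoc, hU', Matrix.one_mul]
  have h := core (U * M) (U * H) (U * X) r s hs β hβ
    ⟨(Matrix.rank_mul_le_right _ _).trans hH.1, fun W hW => by
      rw [← hback W, ← Matrix.mul_sub, ← Matrix.mul_sub, norm_U U hU, norm_U U hU]
      exact hH.2 _ ((Matrix.rank_mul_le_right _ _).trans hW)⟩
    (fun Z hZ => by
      rw [← hback Z, inner_U U hU, norm_U U hU]
      exact hM _ ((Matrix.rank_mul_le_right _ _).trans hZ)) I J hIJ hI hJ hHI hXJ
  rwa [← Matrix.mul_sub, inner_U U hU, norm_U U hU] at h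

lemma sign_mul_le (a b : ℝ) : Real.sign a * b ≤ |b| := by
  rcases Real.sign_apply_eq a with h | h | h <;> rw [h]
  · simpa using neg_le_abs b
  · simp
  · simpa using le_abs_self b

lemma sign_mul_self' (a : ℝ) : Real.sign a * a = |a| := by
  rcases lt_trichotomy a 0 with h | h | h
  · rw [Real.sign_of_neg h, abs_of_neg h]; ring
  · simp [h]
  · rw [Real.sign_of_pos h, abs_of_pos h]; ring

lemma l1_nonneg {m : ℕ} (v : Fin m → ℝ) : 0 ≤ l1norm v :=
  Finset.sum_nonneg fun _ _ => abs_nonneg _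

lemma expand (X H : Matrix (Fin N₁) (Fin N₂) ℝ) (μ : ℝ) :
    frobNorm (X - μ • H) ^ 2 =
      frobNorm X ^ 2 - 2 * μ * frobInner X H + μ ^ 2 * frobNorm H ^ 2 := by
  simp only [frobNorm_sq, frobInner, Finset.mul_sum, ← Finset.sum_add_distrib,
    ← Finset.sum_sub_distrib]
  refine Finset.sum_congr rfl fun i _ => Finset.sum_congr rfl fun j _ => ?_
  simp only [Matrix.sub_apply, Matrix.smul_apply, smul_eq_mul]
  ring

end S4


/-- Proposition 2: under the modified rank-restricted isometry property of order s + r,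
with H a best rank-s approximation of 𝓐*(sgn(𝓐(X) + e)) and a suitable stepsize μ,
‖X − μH‖_F ≤ (1 − 1/(2γ²) + τ√(r/(s+r)))·‖X‖_F + (6τ²/β)·‖e‖₁, where γ := β/α. -/
theorem stmt4 {N₁ N₂ m : ℕ} (r s : ℕ) (hr : 1 ≤ r) (hrs : r ≤ s)
    (hdim : s + r ≤ min N₁ N₂)
    (A : Matrix (Fin N₁) (Fin N₂) ℝ →ₗ[ℝ] (Fin m → ℝ))
    (Astar : (Fin m → ℝ) →ₗ[ℝ] Matrix (Fin N₁) (Fin N₂) ℝ)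
    (hadj : ∀ (u : Fin m → ℝ) (Z : Matrix (Fin N₁) (Fin N₂) ℝ),
      frobInner (Astar u) Z = ∑ i, u i * A Z i)
    (α β : ℝ) (hα : 0 < α) (hαβ : α ≤ β)
    (hRIP : ∀ Z : Matrix (Fin N₁) (Fin N₂) ℝ, Z.rank ≤ s + r →
      α * frobNorm Z ≤ l1norm (A Z) ∧ l1norm (A Z) ≤ β * frobNorm Z)
    (X : Matrix (Fin N₁) (Fin N₂) ℝ) (hX : X.rank ≤ r) (e : Fin m → ℝ)
    (H : Matrix (Fin N₁) (Fin N₂) ℝ)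
    (hH : IsBestRankApprox s (Astar (sgnVec (A X + e))) H)
    (τ ν : ℝ) (hτ : 1 ≤ τ) (hν1 : β ^ 2 / τ ≤ ν) (hν2 : ν ≤ β ^ 2)
    (hν3 : frobNorm H ^ 2 ≤ ν)
    (μ : ℝ) (hμ : μ = l1norm (A X + e) / ν) :
    frobNorm (X - μ • H) ≤
      (1 - 1 / (2 * (β / α) ^ 2) + τ * Real.sqrt ((r : ℝ) / ((s : ℝ) + (r : ℝ)))) * frobNorm X
        + (6 * τ ^ 2 / β) * l1norm e := by
  have hβ : 0 < β := hα.trans_le hαβ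
  have hν : 0 < ν := lt_of_lt_of_le (by positivity) hν1
  have hM : ∀ Z : Matrix (Fin N₁) (Fin N₂) ℝ, Z.rank ≤ s + r →
      frobInner (Astar (sgnVec (A X + e))) Z ≤ β * frobNorm Z := by
    intro Z hZ
    rw [hadj]
    exact (Finset.sum_le_sum fun i _ => S4.sign_mul_le _ _).trans (hRIP Z hZ).2
  have hkey := S4.key _ H X r s (hr.trans hrs) (hdim.trans (min_le_left _ _)) β hβ.le hX hH hM
  obtain ⟨hA1, hA2⟩ := hRIP X (hX.trans (Nat.le_add_left _ _))
  have hXM : l1norm (A X + e) - l1norm e ≤ frobInner (Astar (sgnVec (A X + e))) X := by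
    rw [hadj]
    unfold l1norm
    rw [← Finset.sum_sub_distrib]
    refine Finset.sum_le_sum fun i _ => ?_
    have h1 := S4.sign_mul_self' ((A X + e) i)
    have h2 := S4.sign_mul_le ((A X + e) i) (e i)
    have h3 : (A X + e) i = A X i + e i := rfl
    unfold sgnVec
    rw [← h1]
    nth_rewrite 2 [h3]
    rw [mul_add]
    linarith
  have hsub : frobInner X (Astar (sgnVec (A X + e)) - H)
      = frobInner (Astar (sgnVec (A X + e))) X - frobInner X H := by
    simp only [frobInner, ← Finset.sum_sub_distrib]
    refine Finset.sum_congr rfl fun i _ => Finset.sum_congr rfl fun j _ => ?_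
    simp only [Matrix.sub_apply]
    ring
  have hb1 : l1norm (A X) - l1norm e ≤ l1norm (A X + e) := by
    unfold l1norm
    rw [← Finset.sum_sub_distrib]
    refine Finset.sum_le_sum fun i _ => ?_
    have h := abs_sub_abs_le_abs_sub (A X i) (-e i)
    rw [abs_neg, sub_neg_eq_add] at h
    exact h
  have hb2 : l1norm (A X + e) ≤ l1norm (A X) + l1norm e := by
    unfold l1norm
    rw [← Finset.sum_add_distrib]
    exact Finset.sum_le_sum fun i _ => abs_add_le _ _
  have hb0 := S4.l1_nonneg (A X + e)
  have hμ0 : 0 ≤ μ := by rw [hμ]; positivity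
  have hμν : μ * ν = l1norm (A X + e) := by rw [hμ]; field_simp
  refine S4.final (frobNorm X) (l1norm e) (l1norm (A X + e)) α β τ ν _ _ (S4.frobNorm_nonneg _)
    (S4.l1_nonneg _) hα hαβ hτ hν1 hν2 (Real.sqrt_nonneg _) ?_ hb0 (by linarith) (by linarith) ?_
  · refine Real.sqrt_le_one.2 ?_
    exact div_le_one_of_le₀ (by linarith [Nat.cast_nonneg (α := ℝ) s]) (by positivity)
  · rw [← hμ, S4.expand]
    have h1 : l1norm (A X + e) - l1norm e
        - β * Real.sqrt ((r : ℝ) / ((s : ℝ) + (r : ℝ))) * frobNorm X ≤ frobInner X H := by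
      linarith
    have h2 := mul_le_mul_of_nonneg_left h1 hμ0
    have h3 : μ ^ 2 * frobNorm H ^ 2 ≤ μ * l1norm (A X + e) := by
      rw [← hμν]
      calc μ ^ 2 * frobNorm H ^ 2 ≤ μ ^ 2 * ν := mul_le_mul_of_nonneg_left hν3 (sq_nonneg _)
        _ = _ := by ring
    linarith
end
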